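/- Let 1 < p < ∞ and f ∈ L¹_loc(μ), with ∫ f dμ = 0 in the case μ(ℝ^d) < ∞. If min(1, N f) ∈ L^p(μ), then ‖N f‖_{L^p(μ)} ≤ C·‖M^♯ f‖_{L^p(μ)}, where C depends only on p, d, n, C₀ and β_d. -/

import Mathlib

/-!
Common definitions for formalizing Tolsa, "BMO, H¹, and Calderón–Zygmund
operators for non doubling measures".
-/

open MeasureTheory Metric Set Function
open scoped Classical
open scoped ENNReal NNReal BigOperators

noncomputable section

/-- `ℝ^d` with the Euclidean metric. -/
abbrev Euc (d : ℕ) := EuclideanSpace ℝ (Fin d)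

variable {d : ℕ}

/-- The support of a measure: points all of whose balls have positive measure. -/
def measSupp (μ : MeasureTheory.Measure (Euc d)) : Set (Euc d) :=
  {x | ∀ r : ℝ, 0 < r → 0 < μ (Metric.ball x r)}

/-- The growth condition `μ(B(x,r)) ≤ C₀ rⁿ`. -/
def GrowthBound (μ : MeasureTheory.Measure (Euc d)) (n : ℕ) (C₀ : ℝ) : Prop :=
  ∀ (x : Euc d) (r : ℝ), 0 < r → μ (Metric.ball x r) ≤ ENNReal.ofReal (C₀ * r ^ n)

/-- A (closed, axis-parallel) cube with center in the support of `μ` and positive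
side length. -/
structure CubeOf (μ : MeasureTheory.Measure (Euc d)) where
  c : Euc d
  ℓ : ℝ
  ℓ_pos : 0 < ℓ
  c_mem : c ∈ measSupp μ

namespace CubeOf

variable {μ : MeasureTheory.Measure (Euc d)}

/-- The set of points of a cube. -/
def set (Q : CubeOf μ) : Set (Euc d) := {y | ∀ i, |y i - Q.c i| ≤ Q.ℓ / 2}

/-- The concentric dilation `aQ` of a cube, as a set. -/
def dil (Q : CubeOf μ) (a : ℝ) : Set (Euc d) := {y | ∀ i, |y i - Q.c i| ≤ a * Q.ℓ / 2}

/-- The cube `2^k Q`. -/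
def pow2 (Q : CubeOf μ) (k : ℕ) : CubeOf μ :=
  ⟨Q.c, 2 ^ k * Q.ℓ, mul_pos (by positivity) Q.ℓ_pos, Q.c_mem⟩

/-- The cube `6^k Q`. -/
def pow6 (Q : CubeOf μ) (k : ℕ) : CubeOf μ :=
  ⟨Q.c, 6 ^ k * Q.ℓ, mul_pos (by positivity) Q.ℓ_pos, Q.c_mem⟩

end CubeOf

/-- `(α,β)`-doubling cube: `μ(αQ) ≤ β μ(Q)`. -/
def IsDoubling (μ : MeasureTheory.Measure (Euc d)) (α β : ℝ) (Q : CubeOf μ) : Prop :=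
  μ (Q.dil α) ≤ ENNReal.ofReal β * μ Q.set

/-- `N_{Q,R}`: the first integer `k ≥ 1` such that `l(2^k Q) ≥ l(R)`. -/
def NQR {μ : MeasureTheory.Measure (Euc d)} (Q R : CubeOf μ) : ℕ :=
  sInf {k : ℕ | 1 ≤ k ∧ R.ℓ ≤ 2 ^ k * Q.ℓ}

/-- The coefficient `K_{Q,R} = 1 + ∑_{k=1}^{N_{Q,R}} μ(2^k Q)/l(2^k Q)^n`. -/
def Kcoef {μ : MeasureTheory.Measure (Euc d)} (n : ℕ) (Q R : CubeOf μ) : ℝ :=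
  1 + ∑ k ∈ Finset.Icc 1 (NQR Q R), (μ ((Q.pow2 k).set)).toReal / ((2 ^ k * Q.ℓ) ^ n)

/-- The smallest `N ≥ 0` such that `2^N Q` is `(2,βd)`-doubling. -/
def tildeIdx (μ : MeasureTheory.Measure (Euc d)) (βd : ℝ) (Q : CubeOf μ) : ℕ :=
  sInf {N : ℕ | IsDoubling μ 2 βd (Q.pow2 N)}

/-- The cube `Q̃`: the smallest cube `2^N Q`, `N ≥ 0`, which is `(2,βd)`-doubling. -/
def CubeOf.tilde {μ : MeasureTheory.Measure (Euc d)} (Q : CubeOf μ) (βd : ℝ) : CubeOf μ :=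
  Q.pow2 (tildeIdx μ βd Q)

/-- The mean `m_Q f` of `f` over the cube `Q` with respect to `μ`. -/
def mQ (μ : MeasureTheory.Measure (Euc d)) (Q : CubeOf μ) (f : Euc d → ℝ) : ℝ :=
  ⨍ x in Q.set, f x ∂μ

/-- For `μ`-a.e. `x` there are `(2,βd)`-doubling cubes centered at `x` of arbitrarily
small side length. -/
def SmallDoublingAE (μ : MeasureTheory.Measure (Euc d)) (βd : ℝ) : Prop :=
  ∀ᵐ x ∂μ, ∀ ℓ₀ : ℝ, 0 < ℓ₀ → ∃ Q : CubeOf μ, Q.c = x ∧ Q.ℓ < ℓ₀ ∧ IsDoubling μ 2 βd Q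

/-- `C` is an admissible constant in the definition of the `RBMO(μ)` norm of `f`. -/
def RBMOBoundWith (μ : MeasureTheory.Measure (Euc d)) (n : ℕ) (βd : ℝ)
    (f : Euc d → ℝ) (C : ℝ≥0∞) : Prop :=
  (∀ Q : CubeOf μ,
    ∫⁻ x in Q.set, ENNReal.ofReal |f x - mQ μ (Q.tilde βd) f| ∂μ ≤ C * μ (Q.dil 2)) ∧
  (∀ Q R : CubeOf μ, Q.set ⊆ R.set → IsDoubling μ 2 βd Q → IsDoubling μ 2 βd R →
    ENNReal.ofReal |mQ μ Q f - mQ μ R f| ≤ C * ENNReal.ofReal (Kcoef n Q R))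

/-- The `RBMO(μ)` norm `‖f‖_*` (with value `∞` if `f ∉ RBMO(μ)`). -/
def rbmoNorm (μ : MeasureTheory.Measure (Euc d)) (n : ℕ) (βd : ℝ) (f : Euc d → ℝ) : ℝ≥0∞ :=
  sInf {C | RBMOBoundWith μ n βd f C}

/-- The conditions defining `‖f‖_{**,(ρ)}`, for a given family of numbers `fQ`. -/
def StarStarBoundWith (μ : MeasureTheory.Measure (Euc d)) (n : ℕ) (ρ : ℝ)
    (f : Euc d → ℝ) (fQ : CubeOf μ → ℝ) (C : ℝ≥0∞) : Prop :=
  (∀ Q : CubeOf μ, ∫⁻ x in Q.set, ENNReal.ofReal |f x - fQ Q| ∂μ ≤ C * μ (Q.dil ρ)) ∧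
  (∀ Q R : CubeOf μ, Q.set ⊆ R.set →
    ENNReal.ofReal |fQ Q - fQ R| ≤ C * ENNReal.ofReal (Kcoef n Q R))

/-- The norm `‖f‖_{**,(ρ)}`. -/
def starStarNorm (μ : MeasureTheory.Measure (Euc d)) (n : ℕ) (ρ : ℝ) (f : Euc d → ℝ) : ℝ≥0∞ :=
  sInf {C | ∃ fQ : CubeOf μ → ℝ, StarStarBoundWith μ n ρ f fQ C}

end

noncomputable section

variable {d : ℕ}

/-- The conditions defining the `RBMO^p(μ)` norm. -/
def RBMOpBoundWith (μ : MeasureTheory.Measure (Euc d)) (n : ℕ) (βd : ℝ) (p : ℝ)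
    (f : Euc d → ℝ) (C : ℝ≥0∞) : Prop :=
  (∀ Q : CubeOf μ,
    ∫⁻ x in Q.set, ENNReal.ofReal |f x - mQ μ (Q.tilde βd) f| ^ p ∂μ ≤ C ^ p * μ (Q.dil 2)) ∧
  (∀ Q R : CubeOf μ, Q.set ⊆ R.set → IsDoubling μ 2 βd Q → IsDoubling μ 2 βd R →
    ENNReal.ofReal |mQ μ Q f - mQ μ R f| ≤ C * ENNReal.ofReal (Kcoef n Q R))

/-- The `RBMO^p(μ)` norm `‖f‖_{*,p}`. -/
def rbmoPNorm (μ : MeasureTheory.Measure (Euc d)) (n : ℕ) (βd : ℝ) (p : ℝ)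
    (f : Euc d → ℝ) : ℝ≥0∞ :=
  sInf {C | RBMOpBoundWith μ n βd p f C}

/-- Condition (b) of Lemma `fifi` of the paper, with constant `Cb`. -/
def CondB (μ : MeasureTheory.Measure (Euc d)) (n : ℕ) (ρ : ℝ)
    (f : Euc d → ℝ) (Cb : ℝ≥0∞) : Prop :=
  (∀ Q : CubeOf μ, ∫⁻ x in Q.set, ENNReal.ofReal |f x - mQ μ Q f| ∂μ ≤ Cb * μ (Q.dil ρ)) ∧
  (∀ Q R : CubeOf μ, Q.set ⊆ R.set →
    ENNReal.ofReal |mQ μ Q f - mQ μ R f| ≤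
      Cb * ENNReal.ofReal (Kcoef n Q R) * (μ (Q.dil ρ) / μ Q.set + μ (R.dil ρ) / μ R.set))

/-- Condition (c) of Lemma `fifi` of the paper, with constant `Cc`. -/
def CondC (μ : MeasureTheory.Measure (Euc d)) (n : ℕ) (βd : ℝ)
    (f : Euc d → ℝ) (Cc : ℝ≥0∞) : Prop :=
  (∀ Q : CubeOf μ, IsDoubling μ 2 βd Q →
    ∫⁻ x in Q.set, ENNReal.ofReal |f x - mQ μ Q f| ∂μ ≤ Cc * μ Q.set) ∧
  (∀ Q R : CubeOf μ, Q.set ⊆ R.set → IsDoubling μ 2 βd Q → IsDoubling μ 2 βd R →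
    ENNReal.ofReal |mQ μ Q f - mQ μ R f| ≤ Cc * ENNReal.ofReal (Kcoef n Q R))

/-- The conditions defining the norm `‖f‖_∘`, relative to a choice `αQ` of minimizers. -/
def CircBoundWith (μ : MeasureTheory.Measure (Euc d)) (n : ℕ) (βd : ℝ)
    (f : Euc d → ℝ) (αQ : CubeOf μ → ℝ) (C : ℝ≥0∞) : Prop :=
  (∀ Q : CubeOf μ,
    ∫⁻ x in Q.set, ENNReal.ofReal |f x - αQ (Q.tilde βd)| ∂μ ≤ C * μ (Q.dil 2)) ∧
  (∀ Q R : CubeOf μ, Q.set ⊆ R.set → IsDoubling μ 2 βd Q → IsDoubling μ 2 βd R →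
    ENNReal.ofReal |αQ Q - αQ R| ≤ C * ENNReal.ofReal (Kcoef n Q R))

/-- The norm `‖f‖_∘`, relative to a choice `αQ` of minimizers. -/
def circNorm (μ : MeasureTheory.Measure (Euc d)) (n : ℕ) (βd : ℝ)
    (f : Euc d → ℝ) (αQ : CubeOf μ → ℝ) : ℝ≥0∞ :=
  sInf {C | CircBoundWith μ n βd f αQ C}

/-- An atomic block: a function supported on a cube `R`, with zero integral, of the
form `b = ∑ λⱼ aⱼ` with `aⱼ` supported on cubes `Qⱼ ⊆ R` and
`‖aⱼ‖_{L∞(μ)} ≤ (μ(2Qⱼ) K_{Qⱼ,R})⁻¹`. -/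
structure AtomicBlock (μ : MeasureTheory.Measure (Euc d)) (n : ℕ) where
  b : Euc d → ℝ
  R : CubeOf μ
  lam : ℕ → ℝ
  a : ℕ → Euc d → ℝ
  Qj : ℕ → CubeOf μ
  integrable : MeasureTheory.Integrable b μ
  supp_b : ∀ x ∉ R.set, b x = 0
  int_zero : ∫ x, b x ∂μ = 0
  Qj_sub : ∀ j, (Qj j).set ⊆ R.set
  a_supp : ∀ j, ∀ x ∉ (Qj j).set, a j x = 0
  a_meas : ∀ j, MeasureTheory.AEStronglyMeasurable (a j) μ
  a_bound : ∀ j, MeasureTheory.eLpNorm (a j) ⊤ μ ≤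
    (μ ((Qj j).dil 2) * ENNReal.ofReal (Kcoef n (Qj j) R))⁻¹
  lam_summable : Summable fun j => |lam j|
  b_eq : ∀ᵐ x ∂μ, HasSum (fun j => lam j * a j x) (b x)

/-- `|b|_{H^{1,∞}_atb(μ)} = ∑ⱼ |λⱼ|` for the given decomposition. -/
def AtomicBlock.size {μ : MeasureTheory.Measure (Euc d)} {n : ℕ}
    (B : AtomicBlock μ n) : ℝ :=
  ∑' j, |B.lam j|

/-- The `H^{1,∞}_atb(μ)` norm (with value `∞` outside the space). -/
def hatbNorm (μ : MeasureTheory.Measure (Euc d)) (n : ℕ) (f : Euc d → ℝ) : ℝ≥0∞ :=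
  sInf {t : ℝ≥0∞ | ∃ B : ℕ → AtomicBlock μ n,
    (∀ᵐ x ∂μ, HasSum (fun i => (B i).b x) (f x)) ∧
    t = ∑' i, ENNReal.ofReal ((B i).size)}

/-- A `p`-atomic block: like an atomic block, but with the size condition
`‖aⱼ‖_{L^p(μ)} ≤ μ(2Qⱼ)^{1/p-1} K_{Qⱼ,R}⁻¹`. -/
structure PAtomicBlock (μ : MeasureTheory.Measure (Euc d)) (n : ℕ) (p : ℝ) where
  b : Euc d → ℝ
  R : CubeOf μ
  lam : ℕ → ℝ
  a : ℕ → Euc d → ℝ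
  Qj : ℕ → CubeOf μ
  integrable : MeasureTheory.Integrable b μ
  supp_b : ∀ x ∉ R.set, b x = 0
  int_zero : ∫ x, b x ∂μ = 0
  Qj_sub : ∀ j, (Qj j).set ⊆ R.set
  a_supp : ∀ j, ∀ x ∉ (Qj j).set, a j x = 0
  a_meas : ∀ j, MeasureTheory.AEStronglyMeasurable (a j) μ
  a_bound : ∀ j, MeasureTheory.eLpNorm (a j) (ENNReal.ofReal p) μ ≤
    μ ((Qj j).dil 2) ^ (1 / p - 1) * (ENNReal.ofReal (Kcoef n (Qj j) R))⁻¹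
  lam_summable : Summable fun j => |lam j|
  b_eq : ∀ᵐ x ∂μ, HasSum (fun j => lam j * a j x) (b x)

/-- `|b|_{H^{1,p}_atb(μ)} = ∑ⱼ |λⱼ|` for the given decomposition. -/
def PAtomicBlock.size {μ : MeasureTheory.Measure (Euc d)} {n : ℕ} {p : ℝ}
    (B : PAtomicBlock μ n p) : ℝ :=
  ∑' j, |B.lam j|

/-- The `H^{1,p}_atb(μ)` norm (with value `∞` outside the space). -/
def hatbPNorm (μ : MeasureTheory.Measure (Euc d)) (n : ℕ) (p : ℝ) (f : Euc d → ℝ) : ℝ≥0∞ :=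
  sInf {t : ℝ≥0∞ | ∃ B : ℕ → PAtomicBlock μ n p,
    (∀ᵐ x ∂μ, HasSum (fun i => (B i).b x) (f x)) ∧
    t = ∑' i, ENNReal.ofReal ((B i).size)}

/-- A Calderón–Zygmund kernel of dimension `n`, with constant `Ck` and Hölder
exponent `δ`. -/
def CZKernelBound (n : ℕ) (k : Euc d → Euc d → ℝ) (Ck δ : ℝ) : Prop :=
  (∀ x y : Euc d, x ≠ y → |k x y| ≤ Ck / dist x y ^ (n : ℝ)) ∧
  (∀ x x' y : Euc d, x ≠ y → dist x x' ≤ dist x y / 2 →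
    |k x y - k x' y| + |k y x - k y x'| ≤ Ck * dist x x' ^ δ / dist x y ^ ((n : ℝ) + δ))

/-- The truncated operator `T_ε f(x) = ∫_{|x-y|>ε} k(x,y) f(y) dμ(y)`. -/
def trunc (μ : MeasureTheory.Measure (Euc d)) (k : Euc d → Euc d → ℝ) (ε : ℝ)
    (f : Euc d → ℝ) (x : Euc d) : ℝ :=
  ∫ y in {y | ε < dist x y}, k x y * f y ∂μ

/-- The non-centered doubling maximal operator `N`. -/
def Nop (μ : MeasureTheory.Measure (Euc d)) (βd : ℝ) (f : Euc d → ℝ) (x : Euc d) : ℝ≥0∞ :=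
  ⨆ (Q : CubeOf μ) (_ : x ∈ Q.set) (_ : IsDoubling μ 2 βd Q),
    (∫⁻ y in Q.set, ENNReal.ofReal |f y| ∂μ) / μ Q.set

/-- The sharp maximal operator `M^♯`. -/
def Msharp (μ : MeasureTheory.Measure (Euc d)) (n : ℕ) (βd : ℝ)
    (f : Euc d → ℝ) (x : Euc d) : ℝ≥0∞ :=
  (⨆ (Q : CubeOf μ) (_ : x ∈ Q.set),
    (∫⁻ y in Q.set, ENNReal.ofReal |f y - mQ μ (Q.tilde βd) f| ∂μ) / μ (Q.dil (3/2))) +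
  ⨆ (Q : CubeOf μ) (R : CubeOf μ) (_ : x ∈ Q.set) (_ : Q.set ⊆ R.set)
      (_ : IsDoubling μ 2 βd Q) (_ : IsDoubling μ 2 βd R),
    ENNReal.ofReal (|mQ μ Q f - mQ μ R f| / Kcoef n Q R)

/-- The weight functions `w_i = χ_{Q_i} / ∑_k χ_{Q_k}` of the Calderón–Zygmund
decomposition. -/
def czWeight {μ : MeasureTheory.Measure (Euc d)} (J : Finset ℕ) (Q : ℕ → CubeOf μ)
    (i : ℕ) (x : Euc d) : ℝ :=
  Set.indicator (Q i).set
    (fun y => (((J.filter fun kk => y ∈ (Q kk).set).card : ℝ))⁻¹) x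

/-- The smallest `(6,6^{n+1})`-doubling cube of the form `6^k Q`, `k ≥ 1`. -/
def smallest6Doubling (μ : MeasureTheory.Measure (Euc d)) (n : ℕ) (Q : CubeOf μ) : CubeOf μ :=
  Q.pow6 (sInf {k : ℕ | 1 ≤ k ∧ IsDoubling μ 6 (6 ^ (n + 1)) (Q.pow6 k)})

end

/-! ### Auxiliary material -/

namespace Sharp

section
variable {d : ℕ} {μ : MeasureTheory.Measure (Euc d)}

/-- open cube -/
def oset (Q : CubeOf μ) : Set (Euc d) := {y | ∀ i, |y i - Q.c i| < Q.ℓ / 2}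

/-- cube with the same centre and scaled side -/
def scale (Q : CubeOf μ) (a : ℝ) (ha : 0 < a) : CubeOf μ :=
  ⟨Q.c, a * Q.ℓ, mul_pos ha Q.ℓ_pos, Q.c_mem⟩

/-- geometric containment -/
def Inn (Q P : CubeOf μ) : Prop := ∀ i, |Q.c i - P.c i| + Q.ℓ / 2 ≤ P.ℓ / 2

theorem isOpen_oset (Q : CubeOf μ) : IsOpen (oset Q) := by
  have : oset Q = ⋂ i, {y : Euc d | |y i - Q.c i| < Q.ℓ / 2} := by
    ext y; simp [oset]
  rw [this]
  refine isOpen_iInter_of_finite fun i => ?_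
  exact isOpen_lt (by fun_prop) continuous_const

theorem isClosed_dil (Q : CubeOf μ) (a : ℝ) : IsClosed (Q.dil a) := by
  have : Q.dil a = ⋂ i, {y : Euc d | |y i - Q.c i| ≤ a * Q.ℓ / 2} := by
    ext y; simp [CubeOf.dil]
  rw [this]
  refine isClosed_iInter fun i => ?_
  exact isClosed_le (by fun_prop) continuous_const

theorem set_eq_dil (Q : CubeOf μ) : Q.set = Q.dil 1 := by
  simp [CubeOf.set, CubeOf.dil]

theorem isClosed_set (Q : CubeOf μ) : IsClosed Q.set := by
  rw [set_eq_dil]; exact isClosed_dil Q 1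

theorem meas_set (Q : CubeOf μ) : MeasurableSet Q.set := (isClosed_set Q).measurableSet

theorem oset_sub (Q : CubeOf μ) : oset Q ⊆ Q.set := fun _ hy i => (hy i).le

theorem pow2_dil_two (Q : CubeOf μ) (k : ℕ) : (Q.pow2 k).dil 2 = (Q.pow2 (k + 1)).set := by
  ext y
  simp only [CubeOf.dil, CubeOf.set, CubeOf.pow2, mem_ofPred_eq]
  have e : 2 * (2 ^ k * Q.ℓ) / 2 = 2 ^ (k + 1) * Q.ℓ / 2 := by ring
  simp only [e]

theorem scale_dil (Q : CubeOf μ) (a b : ℝ) (ha : 0 < a) :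
    (scale Q a ha).dil b = Q.dil (b * a) := by
  ext y
  simp only [CubeOf.dil, scale, mem_ofPred_eq]
  rw [mul_assoc]

theorem scale_set (Q : CubeOf μ) (a : ℝ) (ha : 0 < a) : (scale Q a ha).set = Q.dil a := by
  rw [set_eq_dil, scale_dil, one_mul]

theorem dil_mono (Q : CubeOf μ) {a b : ℝ} (h : a ≤ b) : Q.dil a ⊆ Q.dil b := by
  intro y hy i
  refine (hy i).trans ?_
  have := Q.ℓ_pos
  gcongr

theorem Inn.sub {Q P : CubeOf μ} (h : Inn Q P) : Q.set ⊆ P.set := by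
  intro y hy i
  have h1 := h i
  have h2 := hy i
  have := abs_sub_le (y i) (Q.c i) (P.c i)
  linarith

theorem Inn.pow2 {Q P : CubeOf μ} (h : Inn Q P) (k : ℕ) : Inn (Q.pow2 k) (P.pow2 k) := by
  intro i
  have h1 := h i
  simp only [CubeOf.pow2]
  have h3 : (1 : ℝ) ≤ 2 ^ k := one_le_pow₀ (by norm_num)
  have := abs_nonneg (Q.c i - P.c i)
  nlinarith

theorem Inn.osub {Q P : CubeOf μ} (h : Inn Q P) : oset Q ⊆ oset P := by
  intro y hy i
  have h1 := h i
  have h2 := hy i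
  have := abs_sub_le (y i) (Q.c i) (P.c i)
  linarith

theorem inn_pow2 (Q : CubeOf μ) (k : ℕ) : Inn Q (Q.pow2 k) := by
  intro i
  simp only [CubeOf.pow2, sub_self, abs_zero, zero_add]
  have h3 : (1 : ℝ) ≤ 2 ^ k := one_le_pow₀ (by norm_num)
  have := Q.ℓ_pos
  nlinarith

theorem Inn.trans {Q P R : CubeOf μ} (h : Inn Q P) (h' : Inn P R) : Inn Q R := by
  intro i
  have h1 := h i
  have h2 := h' i
  have := abs_sub_le (Q.c i) (P.c i) (R.c i)
  linarith

theorem inn_tilde (Q : CubeOf μ) (β : ℝ) : Inn Q (Q.tilde β) := inn_pow2 Q _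

theorem tilde_ℓ (Q : CubeOf μ) (β : ℝ) : Q.ℓ ≤ (Q.tilde β).ℓ := by
  simp only [CubeOf.tilde, CubeOf.pow2]
  have h3 : (1 : ℝ) ≤ 2 ^ (tildeIdx μ β Q) := one_le_pow₀ (by norm_num)
  have := Q.ℓ_pos
  nlinarith

theorem set_sub_ball (hd : 1 ≤ d) (Q : CubeOf μ) : Q.set ⊆ Metric.ball Q.c (d * Q.ℓ) := by
  intro y hy
  rw [Metric.mem_ball, dist_eq_norm, EuclideanSpace.norm_eq]
  have hd' : (1 : ℝ) ≤ d := by exact_mod_cast hd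
  have hl := Q.ℓ_pos
  have h1 : ∑ i, ‖(y - Q.c) i‖ ^ 2 ≤ d * (Q.ℓ / 2) ^ 2 := by
    calc ∑ i, ‖(y - Q.c) i‖ ^ 2 ≤ ∑ _i : Fin d, (Q.ℓ / 2) ^ 2 := by
          refine Finset.sum_le_sum fun i _ => ?_
          have := hy i
          simp only [PiLp.sub_apply, Real.norm_eq_abs]
          gcongr
      _ = _ := by simp
  calc √(∑ i, ‖(y - Q.c) i‖ ^ 2) ≤ √((d * (Q.ℓ / 2)) ^ 2) := by
        refine Real.sqrt_le_sqrt (h1.trans ?_)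
        rw [mul_pow]
        gcongr
        nlinarith
    _ = d * (Q.ℓ / 2) := Real.sqrt_sq (by positivity)
    _ < d * Q.ℓ := by nlinarith

theorem ball_sub_oset (Q : CubeOf μ) : Metric.ball Q.c (Q.ℓ / 2) ⊆ oset Q := by
  intro y hy i
  rw [Metric.mem_ball, dist_eq_norm] at hy
  have := PiLp.norm_apply_le (y - Q.c) i
  simp only [PiLp.sub_apply, Real.norm_eq_abs] at this
  linarith

theorem c_mem_oset (Q : CubeOf μ) : Q.c ∈ oset Q := by
  intro i; simp [Q.ℓ_pos]

theorem set_pos (Q : CubeOf μ) : 0 < μ Q.set :=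
  lt_of_lt_of_le (Q.c_mem _ (half_pos Q.ℓ_pos))
    (measure_mono ((ball_sub_oset Q).trans (oset_sub Q)))

theorem set_le {n : ℕ} {C₀ : ℝ} (hd : 1 ≤ d) (hg : GrowthBound μ n C₀) (Q : CubeOf μ) :
    μ Q.set ≤ ENNReal.ofReal (C₀ * d ^ n * Q.ℓ ^ n) := by
  have hd' : (1 : ℝ) ≤ d := by exact_mod_cast hd
  have hl := Q.ℓ_pos
  calc μ Q.set ≤ μ (Metric.ball Q.c (d * Q.ℓ)) := measure_mono (set_sub_ball hd Q)
    _ ≤ _ := hg _ _ (by positivity)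
    _ = _ := by rw [mul_pow, mul_assoc]

theorem set_lt_top {n : ℕ} {C₀ : ℝ} (hd : 1 ≤ d) (hg : GrowthBound μ n C₀) (Q : CubeOf μ) :
    μ Q.set < ⊤ := (set_le hd hg Q).trans_lt ENNReal.ofReal_lt_top

theorem dil_lt_top {n : ℕ} {C₀ : ℝ} (hd : 1 ≤ d) (hg : GrowthBound μ n C₀) (Q : CubeOf μ)
    {a : ℝ} (ha : 0 < a) : μ (Q.dil a) < ⊤ := by
  rw [← scale_set Q a ha]; exact set_lt_top hd hg _

theorem dil_pos (Q : CubeOf μ) {a : ℝ} (ha : 0 < a) : 0 < μ (Q.dil a) := by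
  rw [← scale_set Q a ha]; exact set_pos _

/-- non doubling chain -/
theorem chain {β : ℝ} (hβ : 0 ≤ β) (P : CubeOf μ) (N : ℕ)
    (h : ∀ k < N, ¬ IsDoubling μ 2 β (P.pow2 k)) (j : ℕ) (hj : j ≤ N) :
    ENNReal.ofReal (β ^ j) * μ (P.pow2 (N - j)).set ≤ μ (P.pow2 N).set := by
  induction j with
  | zero => simp
  | succ j ih =>
    have h1 := h (N - (j + 1)) (by omega)
    rw [IsDoubling, not_le, pow2_dil_two, show N - (j + 1) + 1 = N - j by omega] at h1
    refine le_trans ?_ (ih (by omega))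
    rw [pow_succ, ENNReal.ofReal_mul (by positivity), mul_assoc]
    gcongr

theorem exists_doubling {n : ℕ} {C₀ β : ℝ} (hC₀ : 0 < C₀) (hd : 1 ≤ d) (hβ : (2 : ℝ) ^ n < β)
    (hg : GrowthBound μ n C₀) (P : CubeOf μ) : ∃ N, IsDoubling μ 2 β (P.pow2 N) := by
  by_contra hcon
  push Not at hcon
  have hl := P.ℓ_pos
  have h2 : (0 : ℝ) < 2 ^ n := by positivity
  have hβ0 : 0 < β := h2.trans hβ
  have hd' : (1 : ℝ) ≤ d := by exact_mod_cast hd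
  have key : ∀ N : ℕ, (β / 2 ^ n) ^ N * (μ P.set).toReal ≤ C₀ * d ^ n * P.ℓ ^ n := by
    intro N
    have h1 := chain hβ0.le P N (fun k _ => hcon k) N le_rfl
    have h3 := h1.trans (set_le hd hg (P.pow2 N))
    simp only [Nat.sub_self] at h3
    have h4 : (P.pow2 0).set = P.set := by simp [CubeOf.pow2, CubeOf.set]
    rw [h4, ← ENNReal.ofReal_toReal (set_lt_top hd hg P).ne,
      ← ENNReal.ofReal_mul (by positivity),
      ENNReal.ofReal_le_ofReal_iff (by simp only [CubeOf.pow2]; positivity)] at h3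
    simp only [CubeOf.pow2] at h3
    rw [div_pow, div_mul_eq_mul_div, div_le_iff₀ (by positivity)]
    refine h3.trans (le_of_eq ?_)
    ring
  have hm : 0 < (μ P.set).toReal := ENNReal.toReal_pos (set_pos P).ne' (set_lt_top hd hg P).ne
  have hq : 1 < β / 2 ^ n := by rwa [one_lt_div h2]
  obtain ⟨N, hN⟩ := pow_unbounded_of_one_lt (C₀ * d ^ n * P.ℓ ^ n / (μ P.set).toReal) hq
  rw [div_lt_iff₀ hm] at hN
  exact absurd (key N) (not_le.2 hN)

theorem tilde_doubling {n : ℕ} {C₀ β : ℝ} (hC₀ : 0 < C₀) (hd : 1 ≤ d) (hβ : (2 : ℝ) ^ n < β)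
    (hg : GrowthBound μ n C₀) (P : CubeOf μ) : IsDoubling μ 2 β (P.tilde β) :=
  Nat.sInf_mem (s := {N : ℕ | IsDoubling μ 2 β (P.pow2 N)}) (exists_doubling hC₀ hd hβ hg P)

theorem tilde_eq_self {β : ℝ} (P : CubeOf μ) (h : IsDoubling μ 2 β P) : P.tilde β = P := by
  have h0 : P.pow2 0 = P := by cases P; simp [CubeOf.pow2]
  have : tildeIdx μ β P = 0 := by
    rw [tildeIdx, Nat.sInf_eq_zero]; left
    simpa [h0] using h
  rw [CubeOf.tilde, this, h0]

theorem K_pos {n : ℕ} (Q R : CubeOf μ) : 1 ≤ Kcoef n Q R := by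
  rw [Kcoef]
  have hl := Q.ℓ_pos
  have : 0 ≤ ∑ k ∈ Finset.Icc 1 (NQR Q R),
    (μ ((Q.pow2 k).set)).toReal / ((2 ^ k * Q.ℓ) ^ n) := Finset.sum_nonneg fun k _ => by positivity
  linarith

/-- the universal bound for `K` -/
noncomputable def K0 (d n : ℕ) (C₀ β : ℝ) : ℝ :=
  1 + C₀ * d ^ n * 32 ^ n * ((1 - 2 ^ n / β)⁻¹ + 5)

theorem geom_sum (q : ℝ) (hq0 : 0 ≤ q) (hq : q < 1) (N : ℕ) :
    ∑ k ∈ Finset.range (N + 6), q ^ (N - k) ≤ (1 - q)⁻¹ + 5 := by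
  have h1 : ∑ k ∈ Finset.range (N + 1), q ^ (N - k) ≤ (1 - q)⁻¹ := by
    have := Finset.sum_range_reflect (fun k => q ^ k) (N + 1)
    simp only [Nat.add_sub_cancel] at this
    rw [this, ← tsum_geometric_of_lt_one hq0 hq]
    exact (summable_geometric_of_lt_one hq0 hq).sum_le_tsum _ (fun i _ => by positivity)
  have e : ∀ j, N - (N + j) = 0 := fun j => by omega
  rw [Finset.sum_range_succ, Finset.sum_range_succ, Finset.sum_range_succ, Finset.sum_range_succ,
    Finset.sum_range_succ]
  simp only [e, pow_zero]
  linarith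

theorem K_le {n : ℕ} {C₀ β : ℝ} (hC₀ : 0 < C₀) (hd : 1 ≤ d) (hβ : (2 : ℝ) ^ n < β)
    (hg : GrowthBound μ n C₀) (Q P : CubeOf μ) (h : Inn Q P) (hl : P.ℓ ≤ 32 * Q.ℓ) :
    Kcoef n Q (P.tilde β) ≤ K0 d n C₀ β := by
  have hlQ := Q.ℓ_pos
  have hlP := P.ℓ_pos
  have h2 : (0 : ℝ) < 2 ^ n := by positivity
  have hβ0 : 0 < β := h2.trans hβ
  have hd' : (1 : ℝ) ≤ d := by exact_mod_cast hd
  set N := tildeIdx μ β P with hN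
  have hNQR : NQR Q (P.tilde β) ≤ N + 5 := by
    refine Nat.sInf_le ⟨by omega, ?_⟩
    simp only [CubeOf.tilde, CubeOf.pow2, ← hN]
    calc 2 ^ N * P.ℓ ≤ 2 ^ N * (32 * Q.ℓ) := by gcongr
      _ = _ := by ring
  have hq0 : 0 ≤ 2 ^ n / β := by positivity
  have hq1 : 2 ^ n / β < 1 := by rwa [div_lt_one hβ0]
  have hnd : ∀ k < N, ¬ IsDoubling μ 2 β (P.pow2 k) := fun k hk => Nat.notMem_of_lt_sInf hk
  have term : ∀ k, (μ ((Q.pow2 k).set)).toReal / ((2 ^ k * Q.ℓ) ^ n) ≤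
      C₀ * d ^ n * 32 ^ n * (2 ^ n / β) ^ (N - k) := by
    intro k
    rw [div_le_iff₀ (by positivity)]
    rcases le_or_gt N k with hk | hk
    · rw [Nat.sub_eq_zero_of_le hk, pow_zero, mul_one]
      have := ENNReal.toReal_le_of_le_ofReal (by simp only [CubeOf.pow2]; positivity)
        (set_le hd hg (Q.pow2 k))
      refine this.trans ?_
      simp only [CubeOf.pow2]
      have h32 : (1 : ℝ) ≤ 32 ^ n := one_le_pow₀ (by norm_num)
      have : 0 ≤ C₀ * d ^ n * (2 ^ k * Q.ℓ) ^ n := by positivity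
      nlinarith
    · have c1 := chain hβ0.le P N hnd (N - k) (by omega)
      rw [show N - (N - k) = k by omega] at c1
      have c2 := (mul_le_mul_right (measure_mono (μ := μ) (h.pow2 k).sub)
        (ENNReal.ofReal (β ^ (N - k)))).trans (c1.trans (set_le hd hg (P.pow2 N)))
      rw [← ENNReal.ofReal_toReal (set_lt_top hd hg (Q.pow2 k)).ne,
        ← ENNReal.ofReal_mul (by positivity),
        ENNReal.ofReal_le_ofReal_iff (by simp only [CubeOf.pow2]; positivity)] at c2
      have c3 : β ^ (N - k) * (μ (Q.pow2 k).set).toReal ≤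
          C₀ * d ^ n * (2 ^ N * (32 * Q.ℓ)) ^ n := by
        refine c2.trans ?_
        simp only [CubeOf.pow2]
        gcongr
      have hb : 0 < β ^ (N - k) := by positivity
      rw [← mul_le_mul_iff_right₀ hb]
      refine c3.trans (le_of_eq ?_)
      rw [div_pow]
      field_simp
      rw [← pow_mul, mul_comm n (N - k), pow_mul, ← mul_pow, ← mul_pow]
      congr 1
      have : (2 : ℝ) ^ N = 2 ^ (N - k) * 2 ^ k := by rw [← pow_add]; congr 1; omega
      rw [this]; ring
  rw [Kcoef, K0]
  gcongr
  calc ∑ k ∈ Finset.Icc 1 (NQR Q (P.tilde β)), (μ ((Q.pow2 k).set)).toReal / ((2 ^ k * Q.ℓ) ^ n)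
      ≤ ∑ k ∈ Finset.range (N + 6), (μ ((Q.pow2 k).set)).toReal / ((2 ^ k * Q.ℓ) ^ n) := by
        refine Finset.sum_le_sum_of_subset_of_nonneg ?_ (fun _ _ _ => by positivity)
        intro k hk
        rw [Finset.mem_Icc] at hk
        rw [Finset.mem_range]; omega
    _ ≤ ∑ k ∈ Finset.range (N + 6), C₀ * d ^ n * 32 ^ n * (2 ^ n / β) ^ (N - k) :=
        Finset.sum_le_sum fun k _ => term k
    _ = C₀ * d ^ n * 32 ^ n * ∑ k ∈ Finset.range (N + 6), (2 ^ n / β) ^ (N - k) := by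
        rw [Finset.mul_sum]
    _ ≤ _ := by
        gcongr
        exact geom_sum _ hq0 hq1 N

open Classical in
/-- measurable lower version of the sharp function -/
noncomputable def G1 (μ : MeasureTheory.Measure (Euc d)) (β : ℝ) (f : Euc d → ℝ) (x : Euc d) :
    ℝ≥0∞ :=
  ⨆ (Q : CubeOf μ) (_ : x ∈ oset Q),
    (∫⁻ y in Q.set, ENNReal.ofReal |f y - mQ μ (Q.tilde β) f| ∂μ) / μ (Q.dil (3/2))

open Classical in
noncomputable def G2 (μ : MeasureTheory.Measure (Euc d)) (n : ℕ) (β : ℝ) (f : Euc d → ℝ)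
    (x : Euc d) : ℝ≥0∞ :=
  ⨆ (Q : CubeOf μ) (_ : x ∈ oset Q), ⨆ (R : CubeOf μ) (_ : Q.set ⊆ R.set)
      (_ : IsDoubling μ 2 β Q) (_ : IsDoubling μ 2 β R),
    ENNReal.ofReal (|mQ μ Q f - mQ μ R f| / Kcoef n Q R)

noncomputable def G (μ : MeasureTheory.Measure (Euc d)) (n : ℕ) (β : ℝ) (f : Euc d → ℝ)
    (x : Euc d) : ℝ≥0∞ := G1 μ β f x + G2 μ n β f x

noncomputable def T (μ : MeasureTheory.Measure (Euc d)) (β : ℝ) (f : Euc d → ℝ)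
    (x : Euc d) : ℝ≥0∞ :=
  ⨆ (Q : CubeOf μ) (_ : x ∈ oset Q), ⨆ (_ : IsDoubling μ 2 β Q), ENNReal.ofReal |mQ μ Q f|

theorem meas_sup {ι : Type*} (U : ι → Set (Euc d)) (hU : ∀ i, IsOpen (U i)) (v : ι → ℝ≥0∞) :
    Measurable (fun x => ⨆ i, ⨆ (_ : x ∈ U i), v i) := by
  refine measurable_of_Ioi fun t => ?_
  have : (fun x => ⨆ i, ⨆ (_ : x ∈ U i), v i) ⁻¹' Ioi t = ⋃ i, ⋃ (_ : t < v i), U i := by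
    ext x
    simp only [mem_preimage, mem_Ioi, lt_iSup_iff, mem_iUnion]
    constructor
    · rintro ⟨i, h1, h2⟩; exact ⟨i, h2, h1⟩
    · rintro ⟨i, h1, h2⟩; exact ⟨i, h2, h1⟩
  rw [this]
  exact (isOpen_iUnion fun i => isOpen_iUnion fun _ => hU i).measurableSet

theorem meas_G (n : ℕ) (β : ℝ) (f : Euc d → ℝ) : Measurable (G μ n β f) :=
  (meas_sup _ isOpen_oset _).add (meas_sup _ isOpen_oset _)

theorem meas_T (β : ℝ) (f : Euc d → ℝ) : Measurable (T μ β f) := meas_sup _ isOpen_oset _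

theorem G_le (n : ℕ) (β : ℝ) (f : Euc d → ℝ) (x : Euc d) : G μ n β f x ≤ Msharp μ n β f x := by
  refine add_le_add ?_ ?_
  · refine iSup_mono fun Q => iSup_le fun hx => ?_
    exact le_iSup_of_le (oset_sub Q hx) le_rfl
  · refine iSup_mono fun Q => iSup_le fun hx => iSup_mono fun R => ?_
    exact le_iSup_of_le (oset_sub Q hx) le_rfl

theorem G1_use {n : ℕ} {C₀ : ℝ} (hd : 1 ≤ d) (hg : GrowthBound μ n C₀)
    (β : ℝ) (f : Euc d → ℝ) (x : Euc d) (Q : CubeOf μ) (hx : x ∈ oset Q) :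
    ∫⁻ y in Q.set, ENNReal.ofReal |f y - mQ μ (Q.tilde β) f| ∂μ ≤
      G μ n β f x * μ (Q.dil (3/2)) := by
  rw [← ENNReal.div_le_iff (dil_pos Q (by norm_num)).ne' (dil_lt_top hd hg Q (by norm_num)).ne]
  refine le_trans ?_ (le_self_add : G1 μ β f x ≤ G μ n β f x)
  exact le_iSup₂_of_le Q hx le_rfl

theorem G2_use {n : ℕ} {C₀ β : ℝ} (hC₀ : 0 < C₀) (hd : 1 ≤ d) (hβ : (2 : ℝ) ^ n < β)
    (hg : GrowthBound μ n C₀) (f : Euc d → ℝ) (x : Euc d) (Q R : CubeOf μ) (hx : x ∈ oset Q)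
    (hQR : Q.set ⊆ R.set) (hQ : IsDoubling μ 2 β Q) (hR : IsDoubling μ 2 β R)
    {t : ℝ} (ht : 0 ≤ t) (hG : G μ n β f x ≤ ENNReal.ofReal t) :
    |mQ μ Q f - mQ μ R f| ≤ Kcoef n Q R * t := by
  have h1 : ENNReal.ofReal (|mQ μ Q f - mQ μ R f| / Kcoef n Q R) ≤ ENNReal.ofReal t := by
    refine le_trans ?_ ((le_add_self : G2 μ n β f x ≤ G μ n β f x).trans hG)
    refine le_iSup₂_of_le Q hx ?_
    exact le_iSup₂_of_le R hQR (le_iSup₂_of_le hQ hR le_rfl)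
  rw [ENNReal.ofReal_le_ofReal_iff ht, div_le_iff₀ (lt_of_lt_of_le one_pos (K_pos Q R))] at h1
  linarith

theorem G2_tilde {n : ℕ} {C₀ β : ℝ} (hC₀ : 0 < C₀) (hd : 1 ≤ d) (hβ : (2 : ℝ) ^ n < β)
    (hg : GrowthBound μ n C₀) (f : Euc d → ℝ) (x : Euc d) (Q P : CubeOf μ) (hx : x ∈ oset Q)
    (hQP : Inn Q P) (hl : P.ℓ ≤ 32 * Q.ℓ) (hQ : IsDoubling μ 2 β Q)
    {t : ℝ} (ht : 0 ≤ t) (hG : G μ n β f x ≤ ENNReal.ofReal t) :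
    |mQ μ Q f - mQ μ (P.tilde β) f| ≤ K0 d n C₀ β * t :=
  (G2_use hC₀ hd hβ hg f x Q _ hx (hQP.trans (inn_tilde P β)).sub hQ
    (tilde_doubling hC₀ hd hβ hg P) ht hG).trans
    (mul_le_mul_of_nonneg_right (K_le hC₀ hd hβ hg Q P hQP hl) ht)

theorem locfin {n : ℕ} {C₀ : ℝ} (hg : GrowthBound μ n C₀) : IsLocallyFiniteMeasure μ :=
  ⟨fun x => ⟨Metric.ball x 1, Metric.ball_mem_nhds x one_pos,
    (hg x 1 one_pos).trans_lt ENNReal.ofReal_lt_top⟩⟩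

theorem integrableOn_set (hd : 1 ≤ d) {f : Euc d → ℝ} (hf : LocallyIntegrable f μ)
    (Q : CubeOf μ) : IntegrableOn f Q.set μ := by
  have hc : IsCompact Q.set :=
    Metric.isCompact_of_isClosed_isBounded (isClosed_set Q)
      (Metric.isBounded_ball.subset (set_sub_ball hd Q))
  exact hf.integrableOn_isCompact hc

theorem mean_le {n : ℕ} {C₀ : ℝ} (hd : 1 ≤ d) (hg : GrowthBound μ n C₀) {f : Euc d → ℝ}
    (hf : LocallyIntegrable f μ) (Q : CubeOf μ) (a : ℝ) :
    ENNReal.ofReal |mQ μ Q f - a| * μ Q.set ≤ ∫⁻ y in Q.set, ENNReal.ofReal |f y - a| ∂μ := by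
  have hfi := integrableOn_set hd hf Q
  have hfin := (set_lt_top hd hg Q)
  have hci : IntegrableOn (fun _ : Euc d => a) Q.set μ := integrableOn_const hfin.ne
  have h1 : ∫ y in Q.set, (f y - a) ∂μ = (mQ μ Q f - a) * (μ Q.set).toReal := by
    rw [integral_sub hfi hci, mQ, setAverage_eq, setIntegral_const]
    have : (μ Q.set).toReal ≠ 0 := (ENNReal.toReal_pos (set_pos Q).ne' hfin.ne).ne'
    simp only [Measure.real, smul_eq_mul]
    field_simp
  have h2 := enorm_integral_le_lintegral_enorm (μ := μ.restrict Q.set) (fun y => f y - a)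
  rw [h1, enorm_mul] at h2
  simp only [Real.enorm_eq_ofReal_abs] at h2
  rwa [abs_of_nonneg (ENNReal.toReal_nonneg (a := μ Q.set)), ENNReal.ofReal_toReal hfin.ne] at h2

theorem int_abs_le (Q : CubeOf μ) (f : Euc d → ℝ) (a : ℝ) :
    ∫⁻ y in Q.set, ENNReal.ofReal |f y| ∂μ ≤
      ∫⁻ y in Q.set, ENNReal.ofReal |f y - a| ∂μ + ENNReal.ofReal |a| * μ Q.set := by
  rw [← setLIntegral_const, ← lintegral_add_right _ measurable_const]
  refine lintegral_mono fun y => ?_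
  rw [← ENNReal.ofReal_add (abs_nonneg _) (abs_nonneg _)]
  refine ENNReal.ofReal_le_ofReal ?_
  have := abs_add_le (f y - a) a
  simpa using this

theorem T_le_N {n : ℕ} {C₀ : ℝ} (hd : 1 ≤ d) (hg : GrowthBound μ n C₀) {f : Euc d → ℝ}
    (hf : LocallyIntegrable f μ) (β : ℝ) (x : Euc d) : T μ β f x ≤ Nop μ β f x := by
  refine iSup_mono fun Q => iSup_le fun hx => le_iSup_of_le (oset_sub Q hx) ?_
  refine iSup_mono fun _ => ?_
  rw [ENNReal.le_div_iff_mul_le (Or.inl (set_pos Q).ne') (Or.inl (set_lt_top hd hg Q).ne)]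
  simpa using mean_le hd hg hf Q 0

theorem N_le {n : ℕ} {C₀ β : ℝ} (hC₀ : 0 < C₀) (hd : 1 ≤ d) (hβ : (2 : ℝ) ^ n < β)
    (hg : GrowthBound μ n C₀) (f : Euc d → ℝ) (x : Euc d) :
    Nop μ β f x ≤ ENNReal.ofReal β * G μ n β f x + T μ β f x := by
  refine iSup_le fun Q => iSup_le fun hx => iSup_le fun hQ => ?_
  have hfin := set_lt_top hd hg Q
  have hl := Q.ℓ_pos
  rw [ENNReal.div_le_iff (set_pos Q).ne' hfin.ne]
  set Q' := scale Q (4/3) (by norm_num) with hQ'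
  have hin : Inn Q Q' := by
    intro i
    simp only [hQ', scale, sub_self, abs_zero]
    linarith
  have hx' : x ∈ oset Q' := by
    intro i
    have := hx i
    simp only [hQ', scale]
    linarith
  have h1 := G1_use hd hg β f x Q' hx'
  have h2 : Q'.dil (3/2) = Q.dil 2 := by
    rw [hQ', scale_dil]; norm_num
  rw [h2] at h1
  have hQT : T μ β f x ≥ ENNReal.ofReal |mQ μ (Q'.tilde β) f| :=
    le_iSup₂_of_le (Q'.tilde β) ((inn_tilde Q' β).osub hx')
      (le_iSup_of_le (tilde_doubling hC₀ hd hβ hg Q') le_rfl)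
  calc ∫⁻ y in Q.set, ENNReal.ofReal |f y| ∂μ
      ≤ _ := int_abs_le Q f (mQ μ (Q'.tilde β) f)
    _ ≤ G μ n β f x * (ENNReal.ofReal β * μ Q.set) + T μ β f x * μ Q.set := by
        gcongr
        refine (lintegral_mono_set hin.sub).trans (h1.trans ?_)
        gcongr
        exact hQ
    _ = _ := by ring

end

theorem bes (d : ℕ) : ∃ N : ℕ, ∀ (μ ν : MeasureTheory.Measure (Euc d)) (A U : Set (Euc d))
    (S : A → CubeOf μ) (L : ℝ), (∀ x, (S x).c = x) → (∀ x, (S x).ℓ ≤ L) →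
    (∀ x, μ (A ∩ (S x).set) ≤ ν (S x).set) → (∀ x, (S x).set ⊆ U) → μ A ≤ N * ν U := by
  obtain ⟨N, τ, hτ, hN⟩ := HasBesicovitchCovering.no_satelliteConfig (α := Fin d → ℝ)
  refine ⟨N, fun μ ν A U S L hc hL hA hU => ?_⟩
  let q : Besicovitch.BallPackage A (Fin d → ℝ) :=
    { c := fun x => WithLp.ofLp (x : Euc d)
      r := fun x => (S x).ℓ / 2
      rpos := fun x => half_pos (S x).ℓ_pos
      r_bound := L / 2
      r_le := fun x => by have := hL x; linarith }
  obtain ⟨s, hs1, hs2⟩ := Besicovitch.exist_disjoint_covering_families hτ hN q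
  have hset : ∀ x, (S x).set = (WithLp.ofLp : Euc d → (Fin d → ℝ)) ⁻¹'
      Metric.closedBall (q.c x) (q.r x) := by
    intro x
    ext y
    simp only [mem_preimage, Metric.mem_closedBall]
    rw [dist_pi_le_iff (q.rpos x).le]
    simp only [CubeOf.set, mem_ofPred_eq, Real.dist_eq, hc, q]
  have hdisj : ∀ i, (s i).PairwiseDisjoint fun j => (S j).set := by
    intro i a ha b hb hab
    have := hs1 i ha hb hab
    simp only [Function.onFun, hset] at this ⊢
    exact this.preimage _
  have hcount : ∀ i, (s i).Countable := by
    intro i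
    refine (hs1 i).countable_of_nonempty_interior fun j _ => ?_
    have : (Metric.ball (q.c j) (q.r j)).Nonempty := Metric.nonempty_ball.2 (q.rpos j)
    exact this.mono (interior_maximal Metric.ball_subset_closedBall Metric.isOpen_ball)
  have hcov : A ⊆ ⋃ i, ⋃ j ∈ s i, A ∩ (S j).set := by
    intro x hx
    have := hs2 (mem_range_self (⟨x, hx⟩ : A))
    simp only [mem_iUnion] at this ⊢
    obtain ⟨i, j, hj, hb⟩ := this
    refine ⟨i, j, hj, hx, ?_⟩
    rw [hset]
    exact Metric.ball_subset_closedBall hb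
  calc μ A ≤ μ (⋃ i, ⋃ j ∈ s i, A ∩ (S j).set) := measure_mono hcov
    _ ≤ ∑ i, μ (⋃ j ∈ s i, A ∩ (S j).set) := measure_iUnion_fintype_le _ _
    _ ≤ ∑ _i : Fin N, ν U := by
        refine Finset.sum_le_sum fun i _ => ?_
        calc μ (⋃ j ∈ s i, A ∩ (S j).set) ≤ ∑' j : s i, μ (A ∩ (S j).set) :=
              measure_biUnion_le μ (hcount i) _
          _ ≤ ∑' j : s i, ν (S j).set := ENNReal.tsum_le_tsum fun j => hA j
          _ = ν (⋃ j ∈ s i, (S j).set) :=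
              (measure_biUnion (hcount i) (hdisj i) (fun j _ => meas_set (S j))).symm
          _ ≤ ν U := measure_mono (iUnion₂_subset fun j _ => hU j)
    _ = N * ν U := by simp

theorem goodlam {α : Type*} [MeasurableSpace α] (μ : MeasureTheory.Measure α) (T G : α → ℝ≥0∞)
    (hT : Measurable T) (hG : Measurable G) (p δ η : ℝ) (hp : 0 < p) (hδ : 0 < δ)
    (hη0 : 0 ≤ η) (hη : 2 ^ p * η ≤ 1 / 2)
    (H : ∀ l : ℝ, 0 < l → μ ({x | ENNReal.ofReal (2 * l) < T x} ∩
      {x | G x ≤ ENNReal.ofReal (δ * l)}) ≤ ENNReal.ofReal η * μ {x | ENNReal.ofReal l < T x})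
    (hfin : ∫⁻ x, (min 1 (T x)) ^ p ∂μ < ⊤) :
    ∫⁻ x, T x ^ p ∂μ ≤ ENNReal.ofReal (2 * (2 / δ) ^ p) * ∫⁻ x, G x ^ p ∂μ := by
  have key : ∀ M : ℕ, ∫⁻ x, (min (T x) M) ^ p ∂μ ≤
      ENNReal.ofReal (2 * (2 / δ) ^ p) * ∫⁻ x, G x ^ p ∂μ := by
    intro M
    set t : α → ℝ := fun x => (min (T x) M).toReal with ht
    set g : α → ℝ := fun x => (min (G x) (ENNReal.ofReal (δ * M))).toReal with hg
    have tm : Measurable t := (hT.min measurable_const).ennreal_toReal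
    have gm : Measurable g := (hG.min measurable_const).ennreal_toReal
    have tfin : ∀ x, min (T x) M ≠ ⊤ := fun x => ne_top_of_le_ne_top (by simp) (min_le_right _ _)
    have gfin : ∀ x, min (G x) (ENNReal.ofReal (δ * M)) ≠ ⊤ :=
      fun x => ne_top_of_le_ne_top (by simp) (min_le_right _ _)
    have t0 : ∀ x, 0 ≤ t x := fun x => ENNReal.toReal_nonneg
    have g0 : ∀ x, 0 ≤ g x := fun x => ENNReal.toReal_nonneg
    have tlt : ∀ x (l : ℝ), 0 ≤ l → (l < t x ↔ ENNReal.ofReal l < min (T x) M) := by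
      intro x l hl
      exact (ENNReal.ofReal_lt_iff_lt_toReal hl (tfin x)).symm
    have glt : ∀ x (l : ℝ), 0 ≤ l → (l < g x ↔ ENNReal.ofReal l < min (G x) (ENNReal.ofReal (δ * M))) := by
      intro x l hl
      exact (ENNReal.ofReal_lt_iff_lt_toReal hl (gfin x)).symm
    have et : ∀ x, ENNReal.ofReal (t x ^ p) = (min (T x) M) ^ p := fun x => by
      rw [← ENNReal.ofReal_rpow_of_nonneg (t0 x) hp.le, ht, ENNReal.ofReal_toReal (tfin x)]
    have eg : ∀ x, ENNReal.ofReal (g x ^ p) ≤ G x ^ p := fun x => by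
      rw [← ENNReal.ofReal_rpow_of_nonneg (g0 x) hp.le, hg, ENNReal.ofReal_toReal (gfin x)]
      gcongr
      exact min_le_left _ _
    have l1 := lintegral_rpow_eq_lintegral_meas_lt_mul μ (f := fun x => t x / 2)
      (Filter.Eventually.of_forall fun x => div_nonneg (t0 x) (by norm_num))
      (tm.div_const 2).aemeasurable hp
    have l2 := lintegral_rpow_eq_lintegral_meas_lt_mul μ (f := t)
      (Filter.Eventually.of_forall t0) tm.aemeasurable hp
    have l3 := lintegral_rpow_eq_lintegral_meas_lt_mul μ (f := fun x => g x / δ)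
      (Filter.Eventually.of_forall fun x => div_nonneg (g0 x) hδ.le)
      (gm.div_const δ).aemeasurable hp
    have pt : ∀ l : ℝ, 0 < l → μ {x | l < t x / 2} ≤
        ENNReal.ofReal η * μ {x | l < t x} + μ {x | l < g x / δ} := by
      intro l hl
      rcases le_or_gt (M : ℝ) (2 * l) with hM | hM
      · have : {x | l < t x / 2} = ∅ := by
          ext x
          simp only [mem_ofPred_eq, mem_empty_iff_false, iff_false, not_lt]
          have : t x ≤ M := ENNReal.toReal_le_of_le_ofReal (by positivity) (by simp)
          linarith
        rw [this]; simp
      · have hM0 : (0 : ℝ) < M := by linarith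
        have sub : {x | l < t x / 2} ⊆ ({x | ENNReal.ofReal (2 * l) < T x} ∩
            {x | G x ≤ ENNReal.ofReal (δ * l)}) ∪ {x | l < g x / δ} := by
          intro x hx
          simp only [mem_ofPred_eq, mem_union, mem_inter_iff] at hx ⊢
          have h1 : 2 * l < t x := by linarith
          rw [tlt x _ (by positivity)] at h1
          rcases le_or_gt (G x) (ENNReal.ofReal (δ * l)) with h | h
          · left; exact ⟨h1.trans_le (min_le_left _ _), h⟩
          · right
            rw [lt_div_iff₀ hδ, mul_comm, glt x _ (by positivity)]
            refine lt_min h ?_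
            rw [ENNReal.ofReal_lt_ofReal_iff (by positivity)]
            gcongr
            linarith
        refine (measure_mono sub).trans ((measure_union_le _ _).trans ?_)
        gcongr
        refine (H l hl).trans ?_
        gcongr with x
        intro hx
        rw [tlt x _ hl.le]
        refine lt_min hx ?_
        rw [← ENNReal.ofReal_natCast, ENNReal.ofReal_lt_ofReal_iff hM0]
        linarith
    have main : ∫⁻ x, ENNReal.ofReal ((t x / 2) ^ p) ∂μ ≤
        ENNReal.ofReal η * ∫⁻ x, ENNReal.ofReal (t x ^ p) ∂μ +
        ∫⁻ x, ENNReal.ofReal ((g x / δ) ^ p) ∂μ := by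
      rw [l1, l2, l3, mul_left_comm, ← mul_add]
      gcongr
      have anti : Antitone fun l : ℝ => μ {x | l < t x} :=
        fun a b hab => measure_mono fun x hx => lt_of_le_of_lt hab hx
      have mm : Measurable fun l : ℝ => μ {x | l < t x} * ENNReal.ofReal (l ^ (p - 1)) :=
        anti.measurable.mul (by fun_prop)
      rw [← lintegral_const_mul _ mm, ← lintegral_add_left (mm.const_mul _)]
      refine setLIntegral_mono' measurableSet_Ioi fun l hl => ?_
      rw [← mul_assoc, ← add_mul]
      gcongr
      exact pt l hl
    set I := ∫⁻ x, (min (T x) M) ^ p ∂μ with hI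
    have e1 : ∫⁻ x, ENNReal.ofReal ((t x / 2) ^ p) ∂μ = ENNReal.ofReal ((2 ^ p)⁻¹) * I := by
      rw [hI, ← lintegral_const_mul _ ((hT.min measurable_const).pow_const p)]
      congr 1; ext x
      rw [← et, ← ENNReal.ofReal_mul (by positivity), Real.div_rpow (t0 x) (by norm_num)]
      congr 1; ring
    have e3 : ∫⁻ x, ENNReal.ofReal ((g x / δ) ^ p) ∂μ ≤
        ENNReal.ofReal ((δ ^ p)⁻¹) * ∫⁻ x, G x ^ p ∂μ := by
      rw [← lintegral_const_mul _ (hG.pow_const p)]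
      refine lintegral_mono fun x => ?_
      rw [Real.div_rpow (g0 x) hδ.le, div_eq_inv_mul, ENNReal.ofReal_mul (by positivity)]
      gcongr
      exact eg x
    rw [e1] at main
    simp only [et] at main
    rw [← hI] at main
    have hIfin : I ≠ ⊤ := by
      have : I ≤ ((M : ℝ≥0∞) + 1) ^ p * ∫⁻ x, (min 1 (T x)) ^ p ∂μ := by
        rw [hI, ← lintegral_const_mul _ ((measurable_const.min hT).pow_const p)]
        refine lintegral_mono fun x => ?_
        rw [← ENNReal.mul_rpow_of_nonneg _ _ hp.le]
        gcongr
        rcases le_total 1 (T x) with h | h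
        · rw [min_eq_left h, mul_one]
          exact (min_le_right _ _).trans le_self_add
        · rw [min_eq_right h]
          refine (min_le_left _ _).trans ?_
          rw [add_mul, one_mul]; exact le_add_self
      refine ne_top_of_le_ne_top (ENNReal.mul_ne_top ?_ hfin.ne) this
      exact ENNReal.rpow_ne_top_of_nonneg hp.le (by simp)
    set J := ∫⁻ x, G x ^ p ∂μ with hJ
    rcases eq_or_ne J ⊤ with hJt | hJt
    · rw [hJt, ENNReal.mul_top]
      · exact le_top
      · rw [Ne, ENNReal.ofReal_eq_zero, not_le]; positivity
    have m2 := main.trans (add_le_add_right e3 _)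
    rw [← ENNReal.ofReal_toReal hIfin, ← ENNReal.ofReal_toReal hJt] at m2 ⊢
    rw [← ENNReal.ofReal_mul (by positivity), ← ENNReal.ofReal_mul (by positivity),
      ← ENNReal.ofReal_mul (by positivity), ← ENNReal.ofReal_add (by positivity) (by positivity),
      ENNReal.ofReal_le_ofReal_iff (by positivity)] at m2
    rw [← ENNReal.ofReal_mul (by positivity)]
    refine ENNReal.ofReal_le_ofReal ?_
    have h2p : (0 : ℝ) < 2 ^ p := by positivity
    have hi : 0 ≤ I.toReal := ENNReal.toReal_nonneg
    have m3 : I.toReal ≤ 2 ^ p * η * I.toReal + (2 / δ) ^ p * J.toReal := by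
      have := mul_le_mul_of_nonneg_left m2 h2p.le
      rw [Real.div_rpow (by norm_num) hδ.le]
      calc I.toReal = 2 ^ p * ((2 ^ p)⁻¹ * I.toReal) := by field_simp
        _ ≤ _ := this
        _ = _ := by ring
    nlinarith
  have lim : Filter.Tendsto (fun M : ℕ => ∫⁻ x, (min (T x) M) ^ p ∂μ) Filter.atTop
      (nhds (∫⁻ x, T x ^ p ∂μ)) := by
    refine lintegral_tendsto_of_tendsto_of_monotone
      (fun M => ((hT.min measurable_const).pow_const p).aemeasurable) ?_ ?_
    · refine Filter.Eventually.of_forall fun x a b hab => ?_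
      dsimp only
      gcongr
    · refine Filter.Eventually.of_forall fun x => ?_
      have h1 : Filter.Tendsto (fun M : ℕ => min (T x) (M : ℝ≥0∞)) Filter.atTop
          (nhds (min (T x) ⊤)) :=
        tendsto_const_nhds.min ENNReal.tendsto_nat_nhds_top
      rw [min_top_right] at h1
      exact (ENNReal.continuous_rpow_const.tendsto _).comp h1
  exact le_of_tendsto' lim key

theorem bes2 (d : ℕ) : ∃ N : ℕ, ∀ (μ ν : MeasureTheory.Measure (Euc d)) (A U : Set (Euc d))
    (S : A → CubeOf μ), (∀ x, (S x).c = x) →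
    (∀ x, μ (A ∩ (S x).set) ≤ ν (S x).set) → (∀ x, (S x).set ⊆ U) → μ A ≤ N * ν U := by
  obtain ⟨N, hN⟩ := bes d
  refine ⟨N, fun μ ν A U S hc hA hU => ?_⟩
  let Ak : ℕ → Set (Euc d) := fun k => {x | ∃ h : x ∈ A, (S ⟨x, h⟩).ℓ ≤ k}
  have hmono : Monotone Ak := by
    intro a b hab x hx
    obtain ⟨h, h'⟩ := hx
    exact ⟨h, h'.trans (by exact_mod_cast hab)⟩
  have hU' : A = ⋃ k, Ak k := by
    ext x
    simp only [mem_iUnion]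
    constructor
    · intro h
      obtain ⟨k, hk⟩ := exists_nat_ge (S ⟨x, h⟩).ℓ
      exact ⟨k, h, hk⟩
    · rintro ⟨k, h, _⟩; exact h
  have hsub : ∀ k, Ak k ⊆ A := fun k x hx => hx.1
  calc μ A = μ (⋃ k, Ak k) := by rw [← hU']
    _ = ⨆ k, μ (Ak k) := hmono.measure_iUnion
    _ ≤ _ := iSup_le fun k => by
        refine hN μ ν (Ak k) U (fun x => S ⟨x, hsub k x.2⟩) k (fun x => hc _) (fun x => ?_)
          (fun x => ?_) (fun x => hU _)
        · exact x.2.2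
        · exact (measure_mono (inter_subset_inter_left _ (hsub k))).trans (hA _)

section
variable {d : ℕ} {μ : MeasureTheory.Measure (Euc d)}

/-- cube with given centre and side -/
def cube (x : Euc d) (hx : x ∈ measSupp μ) (l : ℝ) (hl : 0 < l) : CubeOf μ := ⟨x, l, hl, hx⟩

theorem exV {n : ℕ} {C₀ β : ℝ} (hC₀ : 0 < C₀) (hd : 1 ≤ d) (hβ : (2 : ℝ) ^ n < β)
    (hg : GrowthBound μ n C₀) (f : Euc d → ℝ) {x : Euc d} (hx : x ∈ measSupp μ)
    {t lam : ℝ} (ht : 0 ≤ t) (htl : K0 d n C₀ β * t ≤ lam / 8)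
    (hG : G μ n β f x ≤ ENNReal.ofReal t) (Q : CubeOf μ) (hQ : IsDoubling μ 2 β Q)
    (hxQ : x ∈ oset Q) {s : ℝ} (hs : s < |mQ μ Q f|) :
    ∃ V : CubeOf μ, V.c = x ∧ IsDoubling μ 2 β V ∧ 4 * Q.ℓ ≤ V.ℓ ∧ s - lam / 8 < |mQ μ V f| := by
  have hl := Q.ℓ_pos
  let P : CubeOf μ := cube x hx (4 * Q.ℓ) (by positivity)
  have hin : Inn Q P := by
    intro i
    have := hxQ i
    rw [abs_sub_comm] at this
    simp only [P, cube]
    linarith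
  have h1 := G2_tilde hC₀ hd hβ hg f x Q P hxQ hin (by simp only [P, cube]; linarith) hQ ht hG
  refine ⟨P.tilde β, rfl, tilde_doubling hC₀ hd hβ hg P, tilde_ℓ P β, ?_⟩
  have := abs_sub_abs_le_abs_sub (mQ μ Q f) (mQ μ (P.tilde β) f)
  linarith

theorem iUnion_cube (Q : CubeOf μ) (a : ℕ → ℝ) (ha : Filter.Tendsto a Filter.atTop Filter.atTop) :
    ⋃ k, Q.dil (a k) = univ := by
  refine eq_univ_of_forall fun y => ?_
  have hl := Q.ℓ_pos
  obtain ⟨k, hk⟩ := (ha.eventually_ge_atTop (2 * dist y Q.c / Q.ℓ)).exists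
  rw [div_le_iff₀ hl] at hk
  refine mem_iUnion.2 ⟨k, fun i => ?_⟩
  have := PiLp.norm_apply_le (y - Q.c) i
  simp only [PiLp.sub_apply, Real.norm_eq_abs] at this
  rw [← dist_eq_norm] at this
  linarith

theorem sub_two (Q : CubeOf μ) {x : Euc d} (hx : x ∈ measSupp μ) (hxQ : x ∈ oset Q) {a : ℝ}
    (ha : a ≤ Q.ℓ) : (cube x hx 1 one_pos).dil a ⊆ Q.dil 2 := by
  intro z hz i
  have h1 := hz i
  have h2 := hxQ i
  simp only [cube] at h1
  have := abs_sub_le (z i) (x i) (Q.c i)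
  linarith

theorem meas_dil (Q : CubeOf μ) (a : ℝ) : MeasurableSet (Q.dil a) := (isClosed_dil Q a).measurableSet

theorem size_inf {n : ℕ} {C₀ β p : ℝ} (hd : 1 ≤ d)
    (hg : GrowthBound μ n C₀) {f : Euc d → ℝ} (hf : LocallyIntegrable f μ) (hp : 0 < p)
    (hfin : ∫⁻ x, (min 1 (Nop μ β f x)) ^ p ∂μ < ⊤) (hinf : μ univ = ⊤)
    {x : Euc d} (hx : x ∈ measSupp μ) {lam : ℝ} (hlam : 0 < lam) :
    ∃ L : ℝ, ∀ Q : CubeOf μ, IsDoubling μ 2 β Q → x ∈ oset Q → lam < |mQ μ Q f| → Q.ℓ ≤ L := by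
  set I := ∫⁻ x, (min 1 (Nop μ β f x)) ^ p ∂μ with hI
  set B := cube x hx 1 one_pos with hB
  set c : ℝ≥0∞ := (min 1 (ENNReal.ofReal lam)) ^ p with hc
  have hc0 : c ≠ 0 := by
    have : 0 < min 1 (ENNReal.ofReal lam) := lt_min one_pos (ENNReal.ofReal_pos.2 hlam)
    exact (ENNReal.rpow_pos this (by simp)).ne'
  have hct : c ≠ ⊤ := ENNReal.rpow_ne_top_of_nonneg hp.le (by simp)
  have hlim : Filter.Tendsto (fun k : ℕ => μ (B.dil k)) Filter.atTop (nhds (μ univ)) := by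
    rw [← iUnion_cube B (fun k => (k : ℝ)) tendsto_natCast_atTop_atTop]
    exact tendsto_measure_iUnion_atTop fun a b hab => dil_mono B (by exact_mod_cast hab)
  rw [hinf] at hlim
  have hlt : ENNReal.ofReal β * (I / c) < ⊤ :=
    ENNReal.mul_lt_top ENNReal.ofReal_lt_top (ENNReal.div_lt_top hfin.ne hc0)
  obtain ⟨k, hk⟩ := (hlim.eventually (lt_mem_nhds hlt)).exists
  refine ⟨k, fun Q hQ hxQ hm => ?_⟩
  by_contra hcon
  push Not at hcon
  have h1 : μ (B.dil k) ≤ ENNReal.ofReal β * μ Q.set :=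
    (measure_mono (sub_two Q hx hxQ hcon.le)).trans hQ
  have h2 : μ Q.set ≤ I / c := by
    rw [ENNReal.le_div_iff_mul_le (Or.inl hc0) (Or.inl hct), mul_comm, ← setLIntegral_const]
    refine le_trans ?_ (setLIntegral_le_lintegral Q.set _)
    refine setLIntegral_mono' (meas_set Q) fun y hy => ?_
    have : ENNReal.ofReal lam ≤ Nop μ β f y := by
      refine (ENNReal.ofReal_le_ofReal hm.le).trans ?_
      refine le_iSup₂_of_le Q hy (le_iSup_of_le hQ ?_)
      rw [ENNReal.le_div_iff_mul_le (Or.inl (set_pos Q).ne') (Or.inl (set_lt_top hd hg Q).ne)]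
      simpa using mean_le hd hg hf Q 0
    rw [hc]
    gcongr
  exact absurd (h1.trans (by gcongr)) (not_le.2 hk)

theorem K_fin {n : ℕ} (hn : 1 ≤ n) (hfin : μ univ < ⊤) (Q R : CubeOf μ) :
    Kcoef n Q R ≤ 1 + (μ univ).toReal / Q.ℓ ^ n * 2 := by
  have hl := Q.ℓ_pos
  rw [Kcoef]
  gcongr
  calc ∑ k ∈ Finset.Icc 1 (NQR Q R), (μ ((Q.pow2 k).set)).toReal / ((2 ^ k * Q.ℓ) ^ n)
      ≤ ∑ k ∈ Finset.Icc 1 (NQR Q R), (μ univ).toReal / Q.ℓ ^ n * (1 / 2) ^ k := by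
        refine Finset.sum_le_sum fun k _ => ?_
        have h1 : (μ ((Q.pow2 k).set)).toReal ≤ (μ univ).toReal :=
          ENNReal.toReal_mono hfin.ne (measure_mono (subset_univ _))
        have h2 : (2 : ℝ) ^ k ≤ (2 ^ k) ^ n :=
          le_self_pow₀ (one_le_pow₀ (by norm_num)) (by omega)
        calc (μ ((Q.pow2 k).set)).toReal / ((2 ^ k * Q.ℓ) ^ n)
            ≤ (μ univ).toReal / (2 ^ k * Q.ℓ ^ n) := by
              rw [mul_pow]
              gcongr
          _ = _ := by rw [div_pow, one_pow]; field_simp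
    _ = (μ univ).toReal / Q.ℓ ^ n * ∑ k ∈ Finset.Icc 1 (NQR Q R), (1 / 2) ^ k := by
        rw [Finset.mul_sum]
    _ ≤ _ := by
        gcongr
        exact (summable_geometric_two.sum_le_tsum _ (fun i _ => by positivity)).trans tsum_geometric_two.le

theorem integrable_fin {n : ℕ} {C₀ β : ℝ} (hn : 1 ≤ n) (hC₀ : 0 < C₀) (hd : 1 ≤ d)
    (hβ : (2 : ℝ) ^ n < β)
    (hg : GrowthBound μ n C₀) {f : Euc d → ℝ} (hf : LocallyIntegrable f μ)
    (hfin : μ univ < ⊤) {x : Euc d} (hx : x ∈ measSupp μ) {t : ℝ} (ht : 0 ≤ t)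
    (hG : G μ n β f x ≤ ENNReal.ofReal t) : Integrable f μ := by
  set Q0 := (cube x hx 1 one_pos).tilde β with hQ0
  have hQ0d : IsDoubling μ 2 β Q0 := tilde_doubling hC₀ hd hβ hg _
  have hx0 : x ∈ oset Q0 := c_mem_oset Q0
  have e : ∀ k, (Q0.pow2 k).set = Q0.dil (2 ^ k) := fun k => by
    simp [CubeOf.set, CubeOf.pow2, CubeOf.dil]
  have hU : ⋃ k, (Q0.pow2 k).set = univ := by
    simp only [e]
    exact iUnion_cube Q0 _ (tendsto_pow_atTop_atTop_of_one_lt (by norm_num))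
  have hmono : Monotone fun k => (Q0.pow2 k).set := by
    intro a b hab
    simp only [e]
    exact dil_mono Q0 (pow_le_pow_right₀ (by norm_num) hab)
  have hlim : Filter.Tendsto (fun k : ℕ => μ (Q0.pow2 k).set) Filter.atTop (nhds (μ univ)) := by
    rw [← hU]; exact tendsto_measure_iUnion_atTop hmono
  have hb1 : (1 : ℝ) < β := lt_of_le_of_lt (one_le_pow₀ (by norm_num)) hβ
  have hpos : 0 < μ univ := (set_pos Q0).trans_le (measure_mono (subset_univ _))
  have hlim2 : Filter.Tendsto (fun k : ℕ => ENNReal.ofReal β * μ (Q0.pow2 k).set) Filter.atTop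
      (nhds (ENNReal.ofReal β * μ univ)) :=
    ENNReal.Tendsto.const_mul hlim (Or.inr ENNReal.ofReal_ne_top)
  have hlt : μ univ < ENNReal.ofReal β * μ univ := by
    conv_lhs => rw [← one_mul (μ univ)]
    exact ENNReal.mul_lt_mul_left hpos.ne' hfin.ne (by simpa using hb1)
  have hdoub : ∀ᶠ k in Filter.atTop, IsDoubling μ 2 β (Q0.pow2 k) := by
    filter_upwards [hlim2.eventually (lt_mem_nhds hlt)] with k hk
    exact (measure_mono (subset_univ _)).trans hk.le
  set ν := μ.withDensity (fun y => ENNReal.ofReal |f y|) with hν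
  have hνlim : Filter.Tendsto (fun k : ℕ => ν (Q0.pow2 k).set) Filter.atTop (nhds (ν univ)) := by
    rw [← hU]; exact tendsto_measure_iUnion_atTop hmono
  set K' := 1 + (μ univ).toReal / Q0.ℓ ^ n * 2 with hK'
  have hbd : ν univ ≤ ENNReal.ofReal t * μ univ +
      ENNReal.ofReal (|mQ μ Q0 f| + K' * t) * μ univ := by
    refine le_of_tendsto hνlim ?_
    filter_upwards [hdoub] with k hk
    have h1 := G2_use hC₀ hd hβ hg f x Q0 (Q0.pow2 k) hx0 (inn_pow2 Q0 k).sub hQ0d hk ht hG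
    have h1' := h1.trans (mul_le_mul_of_nonneg_right (K_fin hn hfin Q0 (Q0.pow2 k)) ht)
    have h2 : |mQ μ (Q0.pow2 k) f| ≤ |mQ μ Q0 f| + K' * t := by
      have := abs_sub_abs_le_abs_sub (mQ μ (Q0.pow2 k) f) (mQ μ Q0 f)
      rw [abs_sub_comm] at this
      linarith
    have h3 := G1_use hd hg β f x (Q0.pow2 k) (c_mem_oset (Q0.pow2 k))
    rw [tilde_eq_self _ hk] at h3
    rw [hν, withDensity_apply _ (meas_set _)]
    refine (int_abs_le (Q0.pow2 k) f (mQ μ (Q0.pow2 k) f)).trans ?_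
    refine add_le_add (h3.trans (mul_le_mul' hG (measure_mono (subset_univ _))))
      (mul_le_mul' (ENNReal.ofReal_le_ofReal h2) (measure_mono (subset_univ _)))
  have hνfin : ν univ < ⊤ := hbd.trans_lt (ENNReal.add_lt_top.2
    ⟨ENNReal.mul_lt_top ENNReal.ofReal_lt_top hfin, ENNReal.mul_lt_top ENNReal.ofReal_lt_top hfin⟩)
  refine ⟨hf.aestronglyMeasurable, ?_⟩
  rw [hν, withDensity_apply _ MeasurableSet.univ, Measure.restrict_univ] at hνfin
  simpa only [HasFiniteIntegral, Real.enorm_eq_ofReal_abs] using hνfin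

theorem size_fin {n : ℕ} {C₀ β : ℝ} (hn : 1 ≤ n) (hC₀ : 0 < C₀) (hd : 1 ≤ d)
    (hβ : (2 : ℝ) ^ n < β)
    (hg : GrowthBound μ n C₀) {f : Euc d → ℝ} (hf : LocallyIntegrable f μ)
    (hfin : μ univ < ⊤) (hint : ∫ x, f x ∂μ = 0)
    {x : Euc d} (hx : x ∈ measSupp μ) {t lam : ℝ} (ht : 0 ≤ t)
    (hlam : 0 < lam) (htl : K0 d n C₀ β * t ≤ lam / 8)
    (hG : G μ n β f x ≤ ENNReal.ofReal t) :
    ∃ L : ℝ, ∀ Q : CubeOf μ, IsDoubling μ 2 β Q → x ∈ oset Q → 3 / 2 * lam < |mQ μ Q f| →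
      Q.ℓ ≤ L := by
  have hfi := integrable_fin hn hC₀ hd hβ hg hf hfin hx ht hG
  set B := cube x hx 1 one_pos with hB
  set ν := μ.withDensity (fun y => ENNReal.ofReal |f y|) with hν
  have hνfin : ν univ < ⊤ := by
    have := hfi.2
    rw [hν, withDensity_apply _ MeasurableSet.univ, Measure.restrict_univ]
    simpa only [HasFiniteIntegral, Real.enorm_eq_ofReal_abs] using this
  have hlim : Filter.Tendsto (fun k : ℕ => ν (B.dil k)ᶜ) Filter.atTop (nhds 0) := by
    have : ⋂ k : ℕ, (B.dil k)ᶜ = ∅ := by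
      rw [← compl_iUnion, iUnion_cube B (fun k => (k : ℝ)) tendsto_natCast_atTop_atTop, compl_univ]
    rw [← measure_empty (μ := ν), ← this]
    refine tendsto_measure_iInter_atTop
      (fun k => (meas_dil B _).compl.nullMeasurableSet) ?_ ⟨0, ?_⟩
    · intro a b hab
      exact compl_subset_compl.2 (dil_mono B (by exact_mod_cast hab))
    · exact ((measure_mono (subset_univ _)).trans_lt hνfin).ne
  have hpos : 0 < ENNReal.ofReal lam * μ B.set :=
    ENNReal.mul_pos (ENNReal.ofReal_pos.2 hlam).ne' (set_pos B).ne'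
  obtain ⟨k, hk, hk1⟩ := ((hlim.eventually (gt_mem_nhds hpos)).and
    (Filter.eventually_ge_atTop 1)).exists
  refine ⟨k, fun Q hQ hxQ hm => ?_⟩
  by_contra hcon
  push Not at hcon
  have hl := Q.ℓ_pos
  have h1 := G2_tilde hC₀ hd hβ hg f x Q (Q.pow2 1) hxQ (inn_pow2 Q 1)
    (by simp only [CubeOf.pow2]; linarith) hQ ht hG
  set P := (Q.pow2 1).tilde β with hP
  have hsub : B.dil k ⊆ P.set := by
    refine (sub_two Q hx hxQ hcon.le).trans ?_
    refine Subset.trans ?_ (inn_tilde (Q.pow2 1) β).sub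
    simp [CubeOf.set, CubeOf.pow2, CubeOf.dil]
  have hm2 : lam < |mQ μ P f| := by
    have := abs_sub_abs_le_abs_sub (mQ μ Q f) (mQ μ P f)
    linarith
  have hPfin := (set_lt_top hd hg P)
  have h2 : ∫ y in P.set, f y ∂μ = (mQ μ P f) * (μ P.set).toReal := by
    rw [mQ, setAverage_eq]
    have : (μ P.set).toReal ≠ 0 := (ENNReal.toReal_pos (set_pos P).ne' hPfin.ne).ne'
    simp only [Measure.real, smul_eq_mul]
    field_simp
  have h3 : ∫ y in P.set, f y ∂μ = - ∫ y in P.setᶜ, f y ∂μ := by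
    have := integral_add_compl (meas_set P) hfi
    linarith
  have h4 : ENNReal.ofReal |mQ μ P f| * μ P.set ≤ ν (B.dil k)ᶜ := by
    have h5 := enorm_integral_le_lintegral_enorm (μ := μ.restrict P.setᶜ) f
    have h6 : ‖∫ y in P.setᶜ, f y ∂μ‖ₑ = ENNReal.ofReal |mQ μ P f| * μ P.set := by
      rw [← enorm_neg, ← h3, h2, enorm_mul]
      simp only [Real.enorm_eq_ofReal_abs]
      rw [abs_of_nonneg (ENNReal.toReal_nonneg (a := μ P.set)), ENNReal.ofReal_toReal hPfin.ne]
    rw [h6] at h5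
    refine h5.trans ?_
    simp only [Real.enorm_eq_ofReal_abs]
    rw [← withDensity_apply _ (meas_set P).compl]
    exact measure_mono (compl_subset_compl.2 hsub)
  have h7 : ENNReal.ofReal lam * μ B.set ≤ ENNReal.ofReal |mQ μ P f| * μ P.set := by
    refine mul_le_mul' (ENNReal.ofReal_le_ofReal hm2.le) (measure_mono ?_)
    rw [set_eq_dil]
    exact (dil_mono B (by exact_mod_cast hk1)).trans hsub
  exact absurd (h7.trans h4) (not_le.2 hk)


theorem T_lt {β : ℝ} {f : Euc d → ℝ} {x : Euc d} {s : ℝ} (h : ENNReal.ofReal s < T μ β f x) :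
    ∃ Q : CubeOf μ, x ∈ oset Q ∧ IsDoubling μ 2 β Q ∧ s < |mQ μ Q f| := by
  simp only [T, lt_iSup_iff] at h
  obtain ⟨Q, h1, h2, h3⟩ := h
  exact ⟨Q, h1, h2, (ENNReal.ofReal_lt_ofReal_iff'.1 h3).1⟩

theorem lt_T {β : ℝ} {f : Euc d → ℝ} {x : Euc d} {s : ℝ} (hs : 0 ≤ s) (Q : CubeOf μ)
    (h1 : x ∈ oset Q) (h2 : IsDoubling μ 2 β Q) (h3 : s < |mQ μ Q f|) :
    ENNReal.ofReal s < T μ β f x := by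
  simp only [T, lt_iSup_iff]
  exact ⟨Q, h1, h2, (ENNReal.ofReal_lt_ofReal_iff_of_nonneg hs).2 h3⟩

theorem exS {n : ℕ} {C₀ β p : ℝ} (hn : 1 ≤ n) (hC₀ : 0 < C₀) (hd : 1 ≤ d)
    (hβ : (2 : ℝ) ^ n < β)
    (hg : GrowthBound μ n C₀) {f : Euc d → ℝ} (hf : LocallyIntegrable f μ) (hp : 0 < p)
    (hfin : ∫⁻ x, (min 1 (Nop μ β f x)) ^ p ∂μ < ⊤) (hint : μ univ < ⊤ → ∫ x, f x ∂μ = 0)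
    {x : Euc d} (hx : x ∈ measSupp μ) {t lam : ℝ} (ht : 0 ≤ t)
    (hlam : 0 < lam) (htl : K0 d n C₀ β * t ≤ lam / 8)
    (hG : G μ n β f x ≤ ENNReal.ofReal t) (hT : ENNReal.ofReal (2 * lam) < T μ β f x) :
    ∃ S : CubeOf μ, S.c = x ∧ IsDoubling μ 2 β S ∧ S.set ⊆ {y | ENNReal.ofReal lam < T μ β f y} ∧
      ∀ Q : CubeOf μ, IsDoubling μ 2 β Q → x ∈ oset Q → S.ℓ ≤ Q.ℓ → |mQ μ Q f| ≤ 3 / 2 * lam := by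
  have hL : ∃ L : ℝ, ∀ Q : CubeOf μ, IsDoubling μ 2 β Q → x ∈ oset Q →
      3 / 2 * lam < |mQ μ Q f| → Q.ℓ ≤ L := by
    rcases eq_top_or_lt_top (μ univ) with h | h
    · exact size_inf hd hg hf hp hfin h hx (by positivity)
    · exact size_fin hn hC₀ hd hβ hg hf h (hint h) hx ht hlam htl hG
  obtain ⟨L, hL⟩ := hL
  obtain ⟨Q0, hxQ0, hQ0, hm0⟩ := T_lt hT
  set Z : Set ℝ := {l | ∃ Q : CubeOf μ, IsDoubling μ 2 β Q ∧ x ∈ oset Q ∧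
      3 / 2 * lam < |mQ μ Q f| ∧ Q.ℓ = l} with hZ
  have hb : BddAbove Z := ⟨L, by rintro _ ⟨Q, h1, h2, h3, rfl⟩; exact hL Q h1 h2 h3⟩
  have h0 : Q0.ℓ ∈ Z := ⟨Q0, hQ0, hxQ0, by linarith, rfl⟩
  have hs0 : 0 < sSup Z := Q0.ℓ_pos.trans_le (le_csSup hb h0)
  obtain ⟨_, ⟨Q1, h1, h2, h3, rfl⟩, h4⟩ := exists_lt_of_lt_csSup ⟨_, h0⟩ (half_lt_self hs0)
  obtain ⟨S, hSc, hSd, hSl, hSm⟩ := exV hC₀ hd hβ hg f hx ht htl hG Q1 h1 h2 h3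
  have hSp := S.ℓ_pos
  have hxS : x ∈ oset S := hSc ▸ c_mem_oset S
  refine ⟨S, hSc, hSd, ?_, ?_⟩
  · intro y hy
    have h5 := G2_tilde hC₀ hd hβ hg f x S (S.pow2 1) hxS (inn_pow2 S 1)
      (by simp only [CubeOf.pow2]; linarith) hSd ht hG
    refine lt_T hlam.le ((S.pow2 1).tilde β) ((inn_tilde _ β).osub ?_)
      (tilde_doubling hC₀ hd hβ hg _) ?_
    · intro i
      have := hy i
      simp only [CubeOf.pow2]
      linarith
    · have := abs_sub_abs_le_abs_sub (mQ μ S f) (mQ μ ((S.pow2 1).tilde β) f)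
      linarith
  · intro Q hQ hxQ hl
    by_contra hcon
    push Not at hcon
    have : Q.ℓ ≤ sSup Z := le_csSup hb ⟨Q, hQ, hxQ, hcon, rfl⟩
    have := Q1.ℓ_pos
    linarith

theorem local_est (d : ℕ) : ∃ N : ℕ, ∀ (μ : MeasureTheory.Measure (Euc d)) (n : ℕ) (C₀ β : ℝ),
    0 < C₀ → 1 ≤ d → (2 : ℝ) ^ n < β → GrowthBound μ n C₀ → ∀ f : Euc d → ℝ,
    LocallyIntegrable f μ → ∀ t lam : ℝ, 0 ≤ t → 0 < lam → K0 d n C₀ β * t ≤ lam / 8 →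
    ∀ S : CubeOf μ, IsDoubling μ 2 β S → G μ n β f S.c ≤ ENNReal.ofReal t →
    (∀ Q : CubeOf μ, IsDoubling μ 2 β Q → S.c ∈ oset Q → S.ℓ ≤ Q.ℓ → |mQ μ Q f| ≤ 3 / 2 * lam) →
    ∀ A : Set (Euc d), (∀ y ∈ A, y ∈ measSupp μ ∧ G μ n β f y ≤ ENNReal.ofReal t ∧
      ENNReal.ofReal (2 * lam) < T μ β f y) →
    μ (A ∩ S.set) ≤ ENNReal.ofReal (N * (8 / 3 * β * (t / lam))) * μ S.set := by
  obtain ⟨N, hN⟩ := bes2 d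
  refine ⟨N, fun μ n C₀ β hC₀ hd hβ hg f hf t lam ht hlam htl S hS hGS hmax A hA => ?_⟩
  have hSp := S.ℓ_pos
  have hb0 : 0 < β := lt_trans (by positivity) hβ
  set S2 := scale S (5 / 4) (by norm_num) with hS2
  set a := mQ μ (S2.tilde β) f with ha
  have hS2l : S2.ℓ = 5 / 4 * S.ℓ := rfl
  have haa : |a| ≤ 3 / 2 * lam := by
    refine hmax _ (tilde_doubling hC₀ hd hβ hg _) (c_mem_oset (S2.tilde β)) ?_
    have := tilde_ℓ S2 β
    linarith
  have hV : ∀ y : (A ∩ S.set : Set (Euc d)), ∃ V : CubeOf μ, V.c = y ∧ V.set ⊆ S2.set ∧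
      15 / 8 * lam < |mQ μ V f| := by
    rintro ⟨y, hyA, hyS⟩
    obtain ⟨hy1, hy2, hy3⟩ := hA y hyA
    obtain ⟨Q, hyQ, hQ, hm⟩ := T_lt hy3
    obtain ⟨V, hVc, hVd, hVl, hVm⟩ := exV hC₀ hd hβ hg f hy1 ht htl hy2 Q hQ hyQ hm
    refine ⟨V, hVc, ?_, by linarith⟩
    have hVp := V.ℓ_pos
    have hyV : y ∈ oset V := hVc ▸ c_mem_oset V
    have hsmall : V.ℓ ≤ S.ℓ / 8 := by
      by_contra hcon
      push Not at hcon
      have h5 := G2_tilde hC₀ hd hβ hg f y V (V.pow2 5) hyV (inn_pow2 V 5)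
        (by simp only [CubeOf.pow2]; norm_num) hVd ht hy2
      have h6 := hmax ((V.pow2 5).tilde β) (tilde_doubling hC₀ hd hβ hg _)
        ((inn_tilde _ β).osub (by
          intro i
          have := hyS i
          rw [abs_sub_comm] at this
          simp only [CubeOf.pow2, hVc]
          linarith))
        (le_trans (by simp only [CubeOf.pow2]; linarith) (tilde_ℓ (V.pow2 5) β))
      have := abs_sub_abs_le_abs_sub (mQ μ V f) (mQ μ ((V.pow2 5).tilde β) f)
      linarith
    rw [hS2, scale_set]
    intro z hz i
    have h1 := hz i
    have h2 := hyS i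
    rw [hVc] at h1
    have := abs_sub_le (z i) (y i) (S.c i)
    linarith
  choose V hVc hVs hVm using hV
  set ν : Measure (Euc d) := ENNReal.ofReal (8 / (3 * lam)) •
    μ.withDensity (fun y => ENNReal.ofReal |f y - a|) with hν
  have hνa : ∀ Q : CubeOf μ, ν Q.set =
      ENNReal.ofReal (8 / (3 * lam)) * ∫⁻ y in Q.set, ENNReal.ofReal |f y - a| ∂μ := by
    intro Q
    rw [hν, Measure.smul_apply, withDensity_apply _ (meas_set Q), smul_eq_mul]
  have h1 := hN μ ν (A ∩ S.set) S2.set V hVc (by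
    intro y
    refine (measure_mono inter_subset_right).trans ?_
    rw [hνa]
    have h2 := mean_le hd hg hf (V y) a
    have h3 : 3 * lam / 8 ≤ |mQ μ (V y) f - a| := by
      have := abs_sub_abs_le_abs_sub (mQ μ (V y) f) a
      have := hVm y
      linarith
    calc μ (V y).set = ENNReal.ofReal (8 / (3 * lam)) * (ENNReal.ofReal (3 * lam / 8) *
          μ (V y).set) := by
          rw [← mul_assoc, ← ENNReal.ofReal_mul (by positivity)]
          have : 8 / (3 * lam) * (3 * lam / 8) = 1 := by field_simp
          rw [this]; simp
      _ ≤ _ := by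
          gcongr
          exact (mul_le_mul' (ENNReal.ofReal_le_ofReal h3) le_rfl).trans h2) hVs
  refine h1.trans ?_
  rw [hνa]
  have h4 := G1_use (n := n) hd hg β f S.c S2 (c_mem_oset S2)
  have h5 : μ (S2.dil (3 / 2)) ≤ ENNReal.ofReal β * μ S.set := by
    refine le_trans (measure_mono ?_) hS
    rw [hS2, scale_dil]
    exact dil_mono S (by norm_num)
  calc (N : ℝ≥0∞) * (ENNReal.ofReal (8 / (3 * lam)) * ∫⁻ y in S2.set, ENNReal.ofReal |f y - a| ∂μ)
      ≤ N * (ENNReal.ofReal (8 / (3 * lam)) * (ENNReal.ofReal t * (ENNReal.ofReal β * μ S.set))) := by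
        gcongr
        exact h4.trans (mul_le_mul' hGS h5)
    _ = _ := by
        rw [← ENNReal.ofReal_natCast, ← mul_assoc, ← mul_assoc, ← mul_assoc,
          ← ENNReal.ofReal_mul (by positivity), ← ENNReal.ofReal_mul (by positivity),
          ← ENNReal.ofReal_mul (by positivity)]
        congr 2
        field_simp

theorem good_lam (d : ℕ) : ∃ N : ℕ, ∀ (μ : MeasureTheory.Measure (Euc d)) (n : ℕ) (C₀ β p : ℝ),
    1 ≤ n → 0 < C₀ → 1 ≤ d → (2 : ℝ) ^ n < β → 0 < p → GrowthBound μ n C₀ →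
    SmallDoublingAE μ β → ∀ f : Euc d → ℝ, LocallyIntegrable f μ →
    (μ univ < ⊤ → ∫ x, f x ∂μ = 0) →
    (∫⁻ x, (min 1 (Nop μ β f x)) ^ p ∂μ < ⊤) →
    ∀ δ : ℝ, 0 ≤ δ → K0 d n C₀ β * δ ≤ 1 / 8 → ∀ lam : ℝ, 0 < lam →
    μ ({x | ENNReal.ofReal (2 * lam) < T μ β f x} ∩ {x | G μ n β f x ≤ ENNReal.ofReal (δ * lam)})
      ≤ ENNReal.ofReal (N * (8 / 3 * β * δ)) * μ {x | ENNReal.ofReal lam < T μ β f x} := by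
  obtain ⟨N1, hN1⟩ := bes2 d
  obtain ⟨N2, hN2⟩ := local_est d
  refine ⟨N1 * N2, fun μ n C₀ β p hn hC₀ hd hβ hp hg hsd f hf hint hfin δ hδ hK lam hlam => ?_⟩
  have hb0 : 0 < β := lt_trans (by positivity) hβ
  set E := {x | ENNReal.ofReal (2 * lam) < T μ β f x} ∩
    {x | G μ n β f x ≤ ENNReal.ofReal (δ * lam)} with hE
  have ht : 0 ≤ δ * lam := by positivity
  have htl : K0 d n C₀ β * (δ * lam) ≤ lam / 8 := by
    rw [← mul_assoc]; nlinarith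
  have hS : ∀ x : (E ∩ measSupp μ : Set (Euc d)), ∃ S : CubeOf μ, S.c = x ∧
      μ ((E ∩ measSupp μ) ∩ S.set) ≤ (ENNReal.ofReal (N2 * (8 / 3 * β * δ)) • μ) S.set ∧
      S.set ⊆ {y | ENNReal.ofReal lam < T μ β f y} := by
    rintro ⟨x, ⟨hxT, hxG⟩, hx⟩
    obtain ⟨S, hSc, hSd, hSs, hSm⟩ := exS hn hC₀ hd hβ hg hf hp hfin hint hx ht hlam htl hxG hxT
    refine ⟨S, hSc, ?_, hSs⟩
    subst hSc
    have := hN2 μ n C₀ β hC₀ hd hβ hg f hf (δ * lam) lam ht hlam htl S hSd hxG hSm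
      (E ∩ measSupp μ) (fun y hy => ⟨hy.2, hy.1.2, hy.1.1⟩)
    rwa [mul_div_assoc, div_self hlam.ne', mul_one] at this
  choose S hSc hSm hSs using hS
  have h1 := hN1 μ _ (E ∩ measSupp μ) _ S hSc hSm hSs
  have h2 : μ E ≤ μ (E ∩ measSupp μ) := by
    refine measure_mono_ae ?_
    filter_upwards [hsd] with x hx hxE
    obtain ⟨Q, hQ, _⟩ := hx 1 one_pos
    exact ⟨hxE, hQ ▸ Q.c_mem⟩
  refine h2.trans (h1.trans (le_of_eq ?_))
  rw [Measure.smul_apply, smul_eq_mul, ← ENNReal.ofReal_natCast, ← mul_assoc,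
    ← ENNReal.ofReal_mul (by positivity)]
  congr 2
  push_cast
  ring

end

end Sharp

/-- Theorem 6.2: the good-`λ` estimate for the sharp maximal operator:
`‖N f‖_{L^p(μ)} ≤ C ‖M^♯ f‖_{L^p(μ)}` whenever `min(1, N f) ∈ L^p(μ)`. -/
theorem statement13 (d n : ℕ) (hn : 1 ≤ n) (hnd : n ≤ d) (C₀ βd p : ℝ)
    (hC₀ : 0 < C₀) (hβ : (2 : ℝ) ^ n < βd) (hp : 1 < p) :
    ∃ C : ℝ, 0 < C ∧ ∀ μ : MeasureTheory.Measure (Euc d), GrowthBound μ n C₀ →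
      SmallDoublingAE μ βd →
      ∀ f : Euc d → ℝ, MeasureTheory.LocallyIntegrable f μ →
        (μ Set.univ < ⊤ → ∫ x, f x ∂μ = 0) →
        (∫⁻ x, (min 1 (Nop μ βd f x)) ^ p ∂μ < ⊤) →
        (∫⁻ x, (Nop μ βd f x) ^ p ∂μ) ^ (1 / p) ≤
          ENNReal.ofReal C * (∫⁻ x, (Msharp μ n βd f x) ^ p ∂μ) ^ (1 / p) := by
  have hd : 1 ≤ d := hn.trans hnd
  have hb0 : 0 < βd := lt_trans (by positivity) hβ
  have hp0 : 0 < p := by linarith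
  obtain ⟨N, hN⟩ := Sharp.good_lam d
  obtain ⟨δ, hδ, hδK, hδη⟩ : ∃ δ : ℝ, 0 < δ ∧ Sharp.K0 d n C₀ βd * δ ≤ 1 / 8 ∧
      2 ^ p * (N * (8 / 3 * βd * δ)) ≤ 1 / 2 := by
    set a := |Sharp.K0 d n C₀ βd| with ha
    set b := 2 ^ p * (N * (8 / 3 * βd)) with hb
    have ha0 : 0 ≤ a := abs_nonneg _
    have hbb : 0 ≤ b := by positivity
    refine ⟨1 / (8 * (1 + a + b)), by positivity, ?_, ?_⟩
    · have : Sharp.K0 d n C₀ βd ≤ a := le_abs_self _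
      rw [mul_one_div, div_le_div_iff₀ (by positivity) (by norm_num)]
      linarith
    · have e : 2 ^ p * (N * (8 / 3 * βd * (1 / (8 * (1 + a + b))))) = b * (1 / (8 * (1 + a + b))) := by
        rw [hb]; ring
      rw [e, mul_one_div, div_le_div_iff₀ (by positivity) (by norm_num)]
      linarith
  refine ⟨βd + (2 * (2 / δ) ^ p) ^ (1 / p), by positivity, fun μ hg hsd f hf hint hfin => ?_⟩
  have hgl := Sharp.goodlam μ (Sharp.T μ βd f) (Sharp.G μ n βd f) (Sharp.meas_T βd f)
    (Sharp.meas_G n βd f) p δ (N * (8 / 3 * βd * δ)) hp0 hδ (by positivity) hδη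
    (fun l hl => hN μ n C₀ βd p hn hC₀ hd hβ hp0 hg hsd f hf hint hfin δ hδ.le hδK l hl)
    (lt_of_le_of_lt (lintegral_mono fun x => by
      have := Sharp.T_le_N hd hg hf βd x
      gcongr) hfin)
  have hG : (∫⁻ x, Sharp.G μ n βd f x ^ p ∂μ) ^ (1 / p) ≤
      (∫⁻ x, (Msharp μ n βd f x) ^ p ∂μ) ^ (1 / p) := by
    gcongr with x
    exact Sharp.G_le n βd f x
  have hT : (∫⁻ x, Sharp.T μ βd f x ^ p ∂μ) ^ (1 / p) ≤
      ENNReal.ofReal ((2 * (2 / δ) ^ p) ^ (1 / p)) *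
        (∫⁻ x, Sharp.G μ n βd f x ^ p ∂μ) ^ (1 / p) := by
    rw [← ENNReal.ofReal_rpow_of_nonneg (by positivity) (by positivity),
      ← ENNReal.mul_rpow_of_nonneg _ _ (by positivity)]
    gcongr
  have hbG : (∫⁻ x, (ENNReal.ofReal βd * Sharp.G μ n βd f x) ^ p ∂μ) ^ (1 / p) =
      ENNReal.ofReal βd * (∫⁻ x, Sharp.G μ n βd f x ^ p ∂μ) ^ (1 / p) := by
    simp_rw [ENNReal.mul_rpow_of_nonneg _ _ hp0.le]
    rw [lintegral_const_mul _ ((Sharp.meas_G n βd f).pow_const p),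
      ENNReal.mul_rpow_of_nonneg _ _ (by positivity), ← ENNReal.rpow_mul,
      mul_one_div_cancel hp0.ne', ENNReal.rpow_one]
  calc (∫⁻ x, (Nop μ βd f x) ^ p ∂μ) ^ (1 / p)
      ≤ (∫⁻ x, ((fun x => ENNReal.ofReal βd * Sharp.G μ n βd f x) + Sharp.T μ βd f) x ^ p ∂μ)
          ^ (1 / p) := by
        gcongr with x
        exact Sharp.N_le hC₀ hd hβ hg f x
    _ ≤ (∫⁻ x, (ENNReal.ofReal βd * Sharp.G μ n βd f x) ^ p ∂μ) ^ (1 / p) +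
          (∫⁻ x, Sharp.T μ βd f x ^ p ∂μ) ^ (1 / p) :=
        ENNReal.lintegral_Lp_add_le ((Sharp.meas_G n βd f).const_mul _).aemeasurable
          (Sharp.meas_T βd f).aemeasurable hp.le
    _ ≤ _ := by
        rw [hbG, ENNReal.ofReal_add hb0.le (by positivity), add_mul]
        exact add_le_add (by gcongr) (hT.trans (by gcongr))
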